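/- There exist a positive constant C and a time T > 0 such that for all t ≥ T and all x in the set of time-delayed hot spots ℋ(t) = {x ∈ ℝⁿ : u(x,t) = max_{ξ∈ℝⁿ} u(ξ,t)}, one has |x − m_h| ≤ C/t; that is, sup{|x − m_h| : x ∈ ℋ(t)} = O(1/t) as t → ∞. -/

import Mathlib

open Real Set Filter MeasureTheory Metric Pointwise
open scoped Nat Topology

noncomputable section

variable {n : ℕ}

/-- The Laplacian of `v : ℝⁿ → ℝ` at `x`, as the sum of second partial derivatives. -/
def lap (v : EuclideanSpace ℝ (Fin n) → ℝ) (x : EuclideanSpace ℝ (Fin n)) : ℝ :=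
  ∑ i : Fin n, iteratedDeriv 2 (fun a : ℝ => v (x + a • EuclideanSpace.single i (1 : ℝ))) 0

/-- `CS(φ)`: the convex hull of the support of `φ`. -/
def CS (v : EuclideanSpace ℝ (Fin n) → ℝ) : Set (EuclideanSpace ℝ (Fin n)) :=
  convexHull ℝ (tsupport v)

/-- `d_φ`: the diameter of the support of `φ`. -/
def dsupp (v : EuclideanSpace ℝ (Fin n) → ℝ) : ℝ := Metric.diam (tsupport v)

/-- `δ(K,L) = sup_{η ∈ L} dist(η, K)`. -/
def deltaCC (K L : Set (EuclideanSpace ℝ (Fin n))) : ℝ :=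
  sSup ((fun η => Metric.infDist η K) '' L)

/-- The centroid `m_h = (∫ h(y) y dy)/(∫ h(y) dy)`. -/
def centroid (h : EuclideanSpace ℝ (Fin n) → ℝ) : EuclideanSpace ℝ (Fin n) :=
  (∫ y, h y)⁻¹ • ∫ y, h y • y

/-- `T₀(φ) = min{T ≥ 0 : ∀ t ≥ T, t ≥ φ(t) + max{d_h, δ(CS(h),CS(f)) + d_f}}`, `h = f + g`. -/
def T0 (f g : EuclideanSpace ℝ (Fin n) → ℝ) (phi : ℝ → ℝ) : ℝ :=
  sInf {T : ℝ | 0 ≤ T ∧ ∀ t ≥ T,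
    phi t + max (dsupp (f + g)) (deltaCC (CS (f + g)) (CS f) + dsupp f) ≤ t}

/-- Sobolev `W^{ℓ,∞}`-type norm: sum of sup-norms of the iterated derivatives up to order `ℓ`. -/
def sobNorm (ℓ : ℕ) (v : EuclideanSpace ℝ (Fin n) → ℝ) : ℝ :=
  ∑ i ∈ Finset.range (ℓ + 1), ⨆ x, ‖iteratedFDeriv ℝ i v x‖

/-- The `L¹` norm. -/
def L1norm (v : EuclideanSpace ℝ (Fin n) → ℝ) : ℝ := ∫ y, |v y|

/-- The sup norm. -/
def LinfNorm (v : EuclideanSpace ℝ (Fin n) → ℝ) : ℝ := ⨆ x, |v x|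

/-- `𝒞(v)`: the critical points of `v` lying in the interior of its support. -/
def critSet (v : EuclideanSpace ℝ (Fin n) → ℝ) : Set (EuclideanSpace ℝ (Fin n)) :=
  {x | x ∈ interior (tsupport v) ∧ gradient v x = 0}

section Parametric

variable {E V : Type*} [NormedAddCommGroup E] [InnerProductSpace ℝ E] [NormedAddCommGroup V]
  {F : E × ℝ → V} {R T : ℝ}

theorem hasCompactSupport_slice [FiniteDimensional ℝ E]
    (hs : ∀ x, ∀ t ∈ Icc 0 T, R < ‖x‖ → F (x, t) = 0)
    {t : ℝ} (ht : t ∈ Icc 0 T) : HasCompactSupport (fun x => F (x, t)) :=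
  HasCompactSupport.intro (isCompact_closedBall (0 : E) R) fun x hx =>
    hs x t ht (by simpa using hx)

variable [NormedSpace ℝ V]

theorem contDiffAt_of_contDiffOn_pos {k : WithTop ℕ∞} (hF : ContDiffOn ℝ k F (univ ×ˢ Ioi 0)) (x : E) {t : ℝ}
    (ht : 0 < t) : ContDiffAt ℝ k F (x, t) :=
  hF.contDiffAt ((isOpen_univ.prod isOpen_Ioi).mem_nhds ⟨trivial, ht⟩)

theorem contDiff_slice {k : WithTop ℕ∞} (hF : ContDiffOn ℝ k F (univ ×ˢ Ioi 0)) {t : ℝ} (ht : 0 < t) :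
    ContDiff ℝ k (fun x => F (x, t)) :=
  contDiff_iff_contDiffAt.2 fun x =>
    (contDiffAt_of_contDiffOn_pos hF x ht).comp x (f := fun x => (x, t)) (by fun_prop)

theorem hasFDerivAt_slice (hF : ContDiffOn ℝ 1 F (univ ×ˢ Ioi 0)) (x : E) {t : ℝ} (ht : 0 < t) :
    HasFDerivAt (fun x => F (x, t)) ((fderiv ℝ F (x, t)).comp (.inl ℝ E ℝ)) x :=
  ((contDiffAt_of_contDiffOn_pos hF x ht).differentiableAt one_ne_zero).hasFDerivAt.comp x
    (hasFDerivAt_prodMk_left x t)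

theorem hasDerivAt_time (hF : ContDiffOn ℝ 1 F (univ ×ˢ Ioi 0)) (x : E) {t : ℝ} (ht : 0 < t) :
    HasDerivAt (fun s => F (x, s)) (fderiv ℝ F (x, t) (0, 1)) t := by
  have := (((contDiffAt_of_contDiffOn_pos hF x ht).differentiableAt
    one_ne_zero).hasFDerivAt.comp t (hasFDerivAt_prodMk_right x t)).hasDerivAt
  simpa [Function.comp_def] using this

theorem continuousOn_fderiv_apply (hF : ContDiffOn ℝ 1 F (univ ×ˢ Ioi 0)) (w : E × ℝ) :
    ContinuousOn (fun p => fderiv ℝ F p w) (univ ×ˢ Ioi 0) :=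
  (hF.continuousOn_fderiv_of_isOpen (isOpen_univ.prod isOpen_Ioi) le_rfl).clm_apply
    continuousOn_const

theorem continuous_fderiv_slice (hF : ContDiffOn ℝ 1 F (univ ×ˢ Ioi 0)) (w : E × ℝ) {t : ℝ}
    (ht : 0 < t) : Continuous (fun x => fderiv ℝ F (x, t) w) :=
  continuousOn_univ.1 <| (continuousOn_fderiv_apply hF w).comp (f := fun x : E => (x, t))
    (by fun_prop) fun x _ => ⟨trivial, ht⟩

theorem fderiv_eq_zero_of_slab (hs : ∀ x, ∀ t ∈ Icc 0 T, R < ‖x‖ → F (x, t) = 0) {x : E} {t : ℝ}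
    (ht : t ∈ Ioo 0 T) (hx : R < ‖x‖) : fderiv ℝ F (x, t) = 0 := by
  have : F =ᶠ[𝓝 (x, t)] fun _ => (0 : V) := by
    have h : {y : E | R < ‖y‖} ×ˢ Ioo 0 T ∈ 𝓝 (x, t) :=
      ((isOpen_lt continuous_const continuous_norm).prod isOpen_Ioo).mem_nhds ⟨hx, ht⟩
    filter_upwards [h] with p hp using hs p.1 p.2 (Ioo_subset_Icc_self hp.2) hp.1
  rw [this.fderiv_eq]
  simp

variable [FiniteDimensional ℝ E] [MeasurableSpace E] [BorelSpace E]

theorem integral_fderiv_apply_eq_zero {F : E → V} (hF : ContDiff ℝ 1 F)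
    (hc : HasCompactSupport F) (v : E) : ∫ x, fderiv ℝ F x v = 0 := by
  have hd : Continuous (fun x => fderiv ℝ F x v) :=
    (hF.continuous_fderiv one_ne_zero).clm_apply continuous_const
  have hdc : HasCompactSupport (fun x => fderiv ℝ F x v) := by
    refine (hc.fderiv ℝ).comp_left (g := fun L : E →L[ℝ] V => L v) (by simp)
  have := integral_smul_fderiv_eq_neg_fderiv_smul_of_integrable (𝕜 := ℝ) (μ := (volume : Measure E))
    (f := fun _ => (1 : ℝ)) (g := F) (v := v) (by simp)
    (by simpa using hd.integrable_of_hasCompactSupport hdc)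
    (by simpa using hF.continuous.integrable_of_hasCompactSupport hc)
    (fun _ _ => by fun_prop) (fun x _ => (hF.differentiable one_ne_zero) x)
  simpa using this

theorem integral_space_deriv_eq_zero (hF : ContDiffOn ℝ 1 F (univ ×ˢ Ioi 0))
    (hs : ∀ x, ∀ t ∈ Icc 0 T, R < ‖x‖ → F (x, t) = 0) {t : ℝ} (ht : t ∈ Ioo 0 T) (v : E) :
    ∫ x, fderiv ℝ F (x, t) (v, 0) = 0 := by
  rw [← integral_fderiv_apply_eq_zero (contDiff_slice hF ht.1)
    (hasCompactSupport_slice hs (Ioo_subset_Icc_self ht)) v]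
  congr 1 with x
  rw [(hasFDerivAt_slice hF x ht.1).fderiv]
  simp

theorem continuousOn_integral_slice (hF : ContinuousOn F (univ ×ˢ Ici 0))
    (hs : ∀ x, ∀ t ∈ Icc 0 T, R < ‖x‖ → F (x, t) = 0) :
    ContinuousOn (fun t => ∫ x, F (x, t)) (Icc 0 T) := by
  refine continuousOn_integral_of_compact_support (f := fun t x => F (x, t))
    (isCompact_closedBall (0 : E) R) ?_ fun t x ht hx => hs x t ht (by simpa using hx)
  exact hF.comp (f := fun p : ℝ × E => (p.2, p.1)) (by fun_prop) fun p hp => ⟨trivial, hp.1.1⟩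

theorem integrable_fderiv_slice (hF : ContDiffOn ℝ 1 F (univ ×ˢ Ioi 0))
    (hs : ∀ x, ∀ t ∈ Icc 0 T, R < ‖x‖ → F (x, t) = 0) {t : ℝ} (ht : t ∈ Ioo 0 T) (w : E × ℝ) :
    Integrable (fun x => fderiv ℝ F (x, t) w) :=
  (continuous_fderiv_slice hF w ht.1).integrable_of_hasCompactSupport <|
    HasCompactSupport.intro (isCompact_closedBall (0 : E) R) fun x hx => by
      rw [fderiv_eq_zero_of_slab hs ht (by simpa using hx)]; rfl

theorem hasDerivAt_integral_slice (hF : ContDiffOn ℝ 1 F (univ ×ˢ Ioi 0))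
    (hs : ∀ x, ∀ t ∈ Icc 0 T, R < ‖x‖ → F (x, t) = 0) {t : ℝ} (ht : t ∈ Ioo 0 T) :
    HasDerivAt (fun t => ∫ x, F (x, t)) (∫ x, fderiv ℝ F (x, t) (0, 1)) t := by
  obtain ⟨ε, hε, hεs⟩ : ∃ ε > 0, Icc (t - ε) (t + ε) ⊆ Ioo 0 T := by
    refine ⟨min t (T - t) / 2, by simp [ht.1, ht.2], fun s hs => ?_⟩
    have h1 := min_le_left t (T - t)
    have h2 := min_le_right t (T - t)
    have h3 : 0 < min t (T - t) := by simp [ht.1, ht.2]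
    constructor <;> linarith [hs.1, hs.2]
  obtain ⟨C, hC⟩ : ∃ C, ∀ p ∈ closedBall (0 : E) R ×ˢ Icc (t - ε) (t + ε),
      ‖fderiv ℝ F p (0, 1)‖ ≤ C :=
    ((isCompact_closedBall (0 : E) R).prod isCompact_Icc).exists_bound_of_continuousOn
      ((continuousOn_fderiv_apply hF (0, 1)).mono fun p hp => ⟨trivial, (hεs hp.2).1⟩)
  refine (hasDerivAt_integral_of_dominated_loc_of_deriv_le (F := fun t x => F (x, t))
    (F' := fun t x => fderiv ℝ F (x, t) (0, 1))
    (Icc_mem_nhds (sub_lt_self t hε) (lt_add_of_pos_right t hε))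
    ?_ ?_ ?_ (bound := (closedBall (0 : E) R).indicator fun _ => C) ?_ ?_ ?_).2
  · filter_upwards [Ioi_mem_nhds ht.1] with s hs0
    exact (contDiff_slice hF hs0).continuous.aestronglyMeasurable
  · exact (contDiff_slice hF ht.1).continuous.integrable_of_hasCompactSupport
      (hasCompactSupport_slice hs (Ioo_subset_Icc_self ht))
  · exact (continuous_fderiv_slice hF _ ht.1).aestronglyMeasurable
  · refine .of_forall fun x s hst => ?_
    by_cases hx : x ∈ closedBall (0 : E) R
    · simpa [indicator_of_mem hx] using hC (x, s) ⟨hx, hst⟩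
    · rw [indicator_of_notMem hx, fderiv_eq_zero_of_slab hs (hεs hst) (by simpa using hx)]
      simp
  · exact (integrable_indicator_iff measurableSet_closedBall).2
      (integrableOn_const (isCompact_closedBall _ _).measure_ne_top)
  · exact .of_forall fun x s hst => hasDerivAt_time hF x (hεs hst).1

end Parametric

section DerivativesUpToBoundary

/-- The derivative of `U` in the space-time direction `w`, one-sided in time at `t = 0`. -/
def stDeriv (U : EuclideanSpace ℝ (Fin n) × ℝ → ℝ) (w : EuclideanSpace ℝ (Fin n) × ℝ)
    (p : EuclideanSpace ℝ (Fin n) × ℝ) : ℝ :=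
  fderivWithin ℝ U (univ ×ˢ Ici 0) p w

variable {U : EuclideanSpace ℝ (Fin n) × ℝ → ℝ}

theorem uniqueDiffOn_slab :
    UniqueDiffOn ℝ ((univ : Set (EuclideanSpace ℝ (Fin n))) ×ˢ Ici (0 : ℝ)) :=
  uniqueDiffOn_univ.prod (uniqueDiffOn_Ici 0)

theorem contDiffOn_stDeriv (hU : ContDiffOn ℝ 2 U (univ ×ˢ Ici 0))
    (w : EuclideanSpace ℝ (Fin n) × ℝ) : ContDiffOn ℝ 1 (stDeriv U w) (univ ×ˢ Ici 0) :=
  (hU.fderivWithin uniqueDiffOn_slab (by norm_num)).clm_apply contDiffOn_const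

theorem contDiffOn_stDeriv_pos (hU : ContDiffOn ℝ 2 U (univ ×ˢ Ici 0))
    (w : EuclideanSpace ℝ (Fin n) × ℝ) : ContDiffOn ℝ 1 (stDeriv U w) (univ ×ˢ Ioi 0) :=
  (contDiffOn_stDeriv hU w).mono (prod_mono_right Ioi_subset_Ici_self)

theorem stDeriv_eq_fderiv (w : EuclideanSpace ℝ (Fin n) × ℝ) (x : EuclideanSpace ℝ (Fin n))
    {t : ℝ} (ht : 0 < t) : stDeriv U w (x, t) = fderiv ℝ U (x, t) w := by
  rw [stDeriv, fderivWithin_of_mem_nhds]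
  exact prod_mem_nhds univ_mem (Ici_mem_nhds ht)

theorem fderiv_stDeriv_comm (hU : ContDiffOn ℝ 2 U (univ ×ˢ Ici 0))
    (v w : EuclideanSpace ℝ (Fin n) × ℝ) (x : EuclideanSpace ℝ (Fin n)) {t : ℝ} (ht : 0 < t) :
    fderiv ℝ (stDeriv U v) (x, t) w = fderiv ℝ (stDeriv U w) (x, t) v := by
  have hc : ContDiffAt ℝ 2 U (x, t) := hU.contDiffAt (prod_mem_nhds univ_mem (Ici_mem_nhds ht))
  have hd : DifferentiableAt ℝ (fderiv ℝ U) (x, t) :=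
    (hc.fderiv_right (m := 1) (by norm_num)).differentiableAt one_ne_zero
  have key : ∀ v w, fderiv ℝ (stDeriv U v) (x, t) w = fderiv ℝ (fderiv ℝ U) (x, t) w v := by
    intro v w
    have he : stDeriv U v =ᶠ[𝓝 (x, t)] fun p => fderiv ℝ U p v := by
      filter_upwards [prod_mem_nhds univ_mem (Ioi_mem_nhds ht)] with p hp
      exact stDeriv_eq_fderiv v p.1 hp.2
    rw [he.fderiv_eq, fderiv_clm_apply hd (by fun_prop)]
    simp
  rw [key, key]
  exact (hc.isSymmSndFDerivAt (by simp)).eq w v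

theorem hasFDerivWithinAt_slab (hU : ContDiffOn ℝ 2 U (univ ×ˢ Ici 0))
    (x : EuclideanSpace ℝ (Fin n)) :
    HasFDerivWithinAt U (fderivWithin ℝ U (univ ×ˢ Ici 0) (x, 0)) (univ ×ˢ Ici 0) (x, 0) :=
  ((hU.differentiableOn two_ne_zero) (x, 0) (mk_mem_prod (mem_univ x) self_mem_Ici)).hasFDerivWithinAt

theorem stDeriv_time_zero (hU : ContDiffOn ℝ 2 U (univ ×ˢ Ici 0))
    (x : EuclideanSpace ℝ (Fin n)) :
    stDeriv U (0, 1) (x, 0) = derivWithin (fun s => U (x, s)) (Ici 0) 0 := by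
  have h0 : HasDerivWithinAt (fun s : ℝ => (x, s)) (0, 1) (Ici 0) 0 :=
    ((hasDerivAt_const (0 : ℝ) x).prodMk (hasDerivAt_id (0 : ℝ))).hasDerivWithinAt
  have h2 := (hasFDerivWithinAt_slab hU x).comp_hasDerivWithinAt (0 : ℝ) h0
    (fun s hs => mk_mem_prod (mem_univ x) hs)
  exact (h2.derivWithin (uniqueDiffOn_Ici (0 : ℝ) 0 self_mem_Ici)).symm

theorem stDeriv_space_zero (hU : ContDiffOn ℝ 2 U (univ ×ˢ Ici 0))
    (x e : EuclideanSpace ℝ (Fin n)) :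
    stDeriv U (e, 0) (x, 0) = fderiv ℝ (fun y => U (y, 0)) x e := by
  have h0 : HasFDerivWithinAt (fun y : EuclideanSpace ℝ (Fin n) => (y, (0 : ℝ)))
      (.inl ℝ (EuclideanSpace ℝ (Fin n)) ℝ) univ x :=
    (hasFDerivAt_prodMk_left x (0 : ℝ)).hasFDerivWithinAt
  have h2 := (hasFDerivWithinAt_slab hU x).comp x h0
    (fun s _ => mk_mem_prod (mem_univ s) self_mem_Ici)
  have h3 : fderiv ℝ (fun y => U (y, 0)) x = _ := h2.hasFDerivAt_of_univ.fderiv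
  rw [h3]
  simp [stDeriv]

theorem contDiffOn_one_pos (hU : ContDiffOn ℝ 2 U (univ ×ˢ Ici 0)) :
    ContDiffOn ℝ 1 U (univ ×ˢ Ioi 0) :=
  (hU.of_le (by norm_num)).mono (prod_mono_right Ioi_subset_Ici_self)

theorem hasDerivAt_time_stDeriv (hU : ContDiffOn ℝ 2 U (univ ×ˢ Ici 0))
    (x : EuclideanSpace ℝ (Fin n)) {t : ℝ} (ht : 0 < t) :
    HasDerivAt (fun s => U (x, s)) (stDeriv U (0, 1) (x, t)) t := by
  rw [stDeriv_eq_fderiv _ _ ht]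
  exact hasDerivAt_time (contDiffOn_one_pos hU) x ht

theorem hasDerivAt_line {F : EuclideanSpace ℝ (Fin n) × ℝ → ℝ}
    (hF : ContDiffOn ℝ 1 F (univ ×ˢ Ioi 0)) (x e : EuclideanSpace ℝ (Fin n)) {t : ℝ} (ht : 0 < t)
    (a : ℝ) :
    HasDerivAt (fun a : ℝ => F (x + a • e, t)) (fderiv ℝ F (x + a • e, t) (e, 0)) a := by
  have h1 : HasDerivAt (fun a : ℝ => x + a • e) e a := by
    simpa using ((hasDerivAt_id a).smul_const e).const_add x
  simpa [Function.comp_def] using (hasFDerivAt_slice hF (x + a • e) ht).comp_hasDerivAt a h1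

theorem lap_eq_sum_stDeriv (hU : ContDiffOn ℝ 2 U (univ ×ˢ Ici 0))
    (x : EuclideanSpace ℝ (Fin n)) {t : ℝ} (ht : 0 < t) :
    lap (fun z => U (z, t)) x = ∑ i : Fin n,
      fderiv ℝ (stDeriv U (EuclideanSpace.single i 1, 0)) (x, t) (EuclideanSpace.single i 1, 0) := by
  refine Finset.sum_congr rfl fun i _ => ?_
  rw [iteratedDeriv_succ, iteratedDeriv_one]
  have h : deriv (fun a : ℝ => U (x + a • EuclideanSpace.single i (1 : ℝ), t)) =
      fun a => stDeriv U (EuclideanSpace.single i 1, 0)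
        (x + a • EuclideanSpace.single i (1 : ℝ), t) := by
    funext a
    rw [stDeriv_eq_fderiv _ _ ht, (hasDerivAt_line (contDiffOn_one_pos hU) x _ ht a).deriv]
  rw [h, (hasDerivAt_line (contDiffOn_stDeriv_pos hU _) x _ ht 0).deriv]
  simp

theorem deriv_deriv_eq_stDeriv (hU : ContDiffOn ℝ 2 U (univ ×ˢ Ici 0))
    (x : EuclideanSpace ℝ (Fin n)) {t : ℝ} (ht : 0 < t) :
    deriv (deriv (fun s => U (x, s))) t = fderiv ℝ (stDeriv U (0, 1)) (x, t) (0, 1) := by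
  have h : deriv (fun s => U (x, s)) =ᶠ[𝓝 t] fun s => stDeriv U (0, 1) (x, s) := by
    filter_upwards [Ioi_mem_nhds ht] with s hs using (hasDerivAt_time_stDeriv hU x hs).deriv
  rw [h.deriv_eq, (hasDerivAt_time (contDiffOn_stDeriv_pos hU _) x ht).deriv]

end DerivativesUpToBoundary

section FinitePropagation

/-- The part of the data of a damped wave that enters the argument: regularity up to `t = 0` and
the equation written with `stDeriv`. -/
structure IsDampedWave (U : EuclideanSpace ℝ (Fin n) × ℝ → ℝ) : Prop where
  contDiffOn : ContDiffOn ℝ 2 U (univ ×ˢ Ici 0)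
  eqn : ∀ x, ∀ t > (0 : ℝ), fderiv ℝ (stDeriv U (0, 1)) (x, t) (0, 1) -
    ∑ i : Fin n, fderiv ℝ (stDeriv U (EuclideanSpace.single i 1, 0)) (x, t)
      (EuclideanSpace.single i 1, 0) + stDeriv U (0, 1) (x, t) = 0

theorem energy_flux_nonpos {a A k phi : ℝ} {b c d q : Fin n → ℝ} (hk : 0 ≤ k) (hphi : 0 ≤ phi)
    (hq : ∑ i, q i ^ 2 ≤ 1) (h : A - ∑ i, d i + a = 0) :
    (-k * (a ^ 2 + ∑ i, b i ^ 2) + phi * (2 * a * A + ∑ i, 2 * b i * c i)) -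
      2 * ∑ i, (-(k * q i) * (a * b i) + phi * (c i * b i + a * d i)) ≤ 0 := by
  have h1 : ∑ i, 2 * (q i * a * b i) ≤ a ^ 2 + ∑ i, b i ^ 2 := by
    calc ∑ i, 2 * (q i * a * b i) ≤ ∑ i, (a ^ 2 * q i ^ 2 + b i ^ 2) :=
          Finset.sum_le_sum fun i _ => by nlinarith [sq_nonneg (a * q i - b i)]
      _ = a ^ 2 * ∑ i, q i ^ 2 + ∑ i, b i ^ 2 := by rw [Finset.sum_add_distrib, Finset.mul_sum]
      _ ≤ _ := by nlinarith [sq_nonneg a]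
  have h2 : 2 * ∑ i, (-(k * q i) * (a * b i) + phi * (c i * b i + a * d i)) =
      -k * ∑ i, 2 * (q i * a * b i) + phi * ∑ i, 2 * b i * c i + 2 * phi * a * ∑ i, d i := by
    simp only [Finset.mul_sum, ← Finset.sum_add_distrib]
    exact Finset.sum_congr rfl fun i _ => by ring
  have h3 : A = ∑ i, d i - a := by linarith
  rw [h2, h3]
  nlinarith [mul_le_mul_of_nonneg_left h1 hk, mul_nonneg hphi (sq_nonneg a)]

/-- The phase `r - t - √(1 + ‖x - x₀‖²)`, positive inside a smoothed backward light cone. -/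
def conePhase (x₀ : EuclideanSpace ℝ (Fin n)) (r : ℝ) (p : EuclideanSpace ℝ (Fin n) × ℝ) : ℝ :=
  r - p.2 - √(1 + ‖p.1 - x₀‖ ^ 2)

variable {x₀ : EuclideanSpace ℝ (Fin n)} {r : ℝ}

theorem hasFDerivAt_conePhase (p : EuclideanSpace ℝ (Fin n) × ℝ) :
    HasFDerivAt (conePhase x₀ r) (-(ContinuousLinearMap.snd ℝ _ ℝ) -
      (√(1 + ‖p.1 - x₀‖ ^ 2))⁻¹ • (innerSL ℝ (p.1 - x₀)).comp
        (ContinuousLinearMap.fst ℝ (EuclideanSpace ℝ (Fin n)) ℝ)) p := by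
  have h0 : HasFDerivAt (fun p : EuclideanSpace ℝ (Fin n) × ℝ => p.1 - x₀)
      (ContinuousLinearMap.fst ℝ (EuclideanSpace ℝ (Fin n)) ℝ) p := hasFDerivAt_fst.sub_const x₀
  have h1 := (h0.norm_sq.const_add 1).sqrt (by positivity)
  have h2 := (((hasFDerivAt_snd (𝕜 := ℝ) (p := p)).const_sub r).sub h1)
  refine h2.congr_fderiv ?_
  congr 1
  rw [← Nat.cast_smul_eq_nsmul ℝ, smul_smul]
  congr 1
  push_cast
  field_simp

theorem contDiff_conePhase : ContDiff ℝ 1 (conePhase x₀ r) := by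
  refine (contDiff_const.sub contDiff_snd).sub (ContDiff.sqrt ?_ fun p => by positivity)
  exact contDiff_const.add ((contDiff_fst.sub contDiff_const).norm_sq ℝ)

theorem conePhase_le {t : ℝ} (ht : 0 ≤ t) {x : EuclideanSpace ℝ (Fin n)} :
    conePhase x₀ r (x, t) ≤ r - ‖x - x₀‖ := by
  have : ‖x - x₀‖ ≤ √(1 + ‖x - x₀‖ ^ 2) := Real.le_sqrt_of_sq_le (by linarith)
  simp only [conePhase]
  linarith

/-- A smooth cutoff to a backward cone with vertex above `x₀`. -/
def coneCutoff (x₀ : EuclideanSpace ℝ (Fin n)) (r : ℝ) (p : EuclideanSpace ℝ (Fin n) × ℝ) : ℝ :=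
  expNegInvGlue (conePhase x₀ r p)

theorem contDiff_coneCutoff : ContDiff ℝ 1 (coneCutoff x₀ r) :=
  (expNegInvGlue.contDiff (n := 1)).comp contDiff_conePhase

theorem coneCutoff_eq_zero {t : ℝ} (ht : 0 ≤ t) {x : EuclideanSpace ℝ (Fin n)}
    (hx : r ≤ ‖x - x₀‖) : coneCutoff x₀ r (x, t) = 0 :=
  expNegInvGlue.zero_of_nonpos ((conePhase_le ht).trans (by linarith))

theorem hasFDerivAt_coneCutoff (p : EuclideanSpace ℝ (Fin n) × ℝ) :
    ∃ k : ℝ, ∃ q : Fin n → ℝ, 0 ≤ k ∧ ∑ i, q i ^ 2 ≤ 1 ∧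
      fderiv ℝ (coneCutoff x₀ r) p (0, 1) = -k ∧
      ∀ i, fderiv ℝ (coneCutoff x₀ r) p (EuclideanSpace.single i 1, 0) = -(k * q i) := by
  have h1 : HasDerivAt expNegInvGlue (deriv expNegInvGlue (conePhase x₀ r p)) (conePhase x₀ r p) :=
    (((expNegInvGlue.contDiff (n := 1)).differentiable (by simp)) _).hasDerivAt
  have h2 := (h1.comp_hasFDerivAt p (hasFDerivAt_conePhase (x₀ := x₀) (r := r) p)).fderiv
  refine ⟨deriv expNegInvGlue (conePhase x₀ r p),
    fun i => (√(1 + ‖p.1 - x₀‖ ^ 2))⁻¹ * (p.1 - x₀) i, expNegInvGlue.monotone.deriv_nonneg, ?_,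
    ?_, fun i => ?_⟩
  · simp only [mul_pow, ← Finset.mul_sum]
    have h3 : ∑ i, (p.1 - x₀) i ^ 2 = ‖p.1 - x₀‖ ^ 2 := by
      rw [EuclideanSpace.norm_sq_eq]; simp
    rw [h3, inv_pow, Real.sq_sqrt (by positivity), inv_mul_le_one₀ (by positivity)]
    linarith
  · rw [show coneCutoff x₀ r = expNegInvGlue ∘ conePhase x₀ r from rfl, h2]
    simp
  · rw [show coneCutoff x₀ r = expNegInvGlue ∘ conePhase x₀ r from rfl, h2]
    simp [EuclideanSpace.inner_single_right]

end FinitePropagation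

section ConeEnergy

variable {U : EuclideanSpace ℝ (Fin n) × ℝ → ℝ} {x₀ : EuclideanSpace ℝ (Fin n)} {r : ℝ}

/-- The wave energy density `u_t² + |∇u|²` localized by the cone cutoff. -/
def coneEnergyDensity (U : EuclideanSpace ℝ (Fin n) × ℝ → ℝ) (x₀ : EuclideanSpace ℝ (Fin n))
    (r : ℝ) (p : EuclideanSpace ℝ (Fin n) × ℝ) : ℝ :=
  coneCutoff x₀ r p *
    (stDeriv U (0, 1) p ^ 2 + ∑ i : Fin n, stDeriv U (EuclideanSpace.single i 1, 0) p ^ 2)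

/-- The `i`-th component of the localized energy flux. -/
def coneFlux (U : EuclideanSpace ℝ (Fin n) × ℝ → ℝ) (x₀ : EuclideanSpace ℝ (Fin n))
    (r : ℝ) (i : Fin n) (p : EuclideanSpace ℝ (Fin n) × ℝ) : ℝ :=
  coneCutoff x₀ r p * (stDeriv U (0, 1) p * stDeriv U (EuclideanSpace.single i 1, 0) p)

theorem contDiffOn_coneEnergyDensity (hU : ContDiffOn ℝ 2 U (univ ×ˢ Ici 0)) :
    ContDiffOn ℝ 1 (coneEnergyDensity U x₀ r) (univ ×ˢ Ici 0) :=
  contDiff_coneCutoff.contDiffOn.mul <| ((contDiffOn_stDeriv hU _).pow 2).add <|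
    ContDiffOn.sum fun _ _ => (contDiffOn_stDeriv hU _).pow 2

theorem contDiffOn_coneFlux (hU : ContDiffOn ℝ 2 U (univ ×ˢ Ici 0)) (i : Fin n) :
    ContDiffOn ℝ 1 (coneFlux U x₀ r i) (univ ×ˢ Ici 0) :=
  contDiff_coneCutoff.contDiffOn.mul ((contDiffOn_stDeriv hU _).mul (contDiffOn_stDeriv hU _))

theorem hasFDerivAt_stDeriv (hU : ContDiffOn ℝ 2 U (univ ×ˢ Ici 0))
    (w : EuclideanSpace ℝ (Fin n) × ℝ) (x : EuclideanSpace ℝ (Fin n)) {t : ℝ} (ht : 0 < t) :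
    HasFDerivAt (stDeriv U w) (fderiv ℝ (stDeriv U w) (x, t)) (x, t) :=
  ((contDiffAt_of_contDiffOn_pos (contDiffOn_stDeriv_pos hU w) x ht).differentiableAt
    one_ne_zero).hasFDerivAt

theorem fderiv_coneEnergyDensity_le (hU : IsDampedWave U) (x : EuclideanSpace ℝ (Fin n)) {t : ℝ}
    (ht : 0 < t) :
    fderiv ℝ (coneEnergyDensity U x₀ r) (x, t) (0, 1) -
      2 * ∑ i, fderiv ℝ (coneFlux U x₀ r i) (x, t) (EuclideanSpace.single i 1, 0) ≤ 0 := by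
  obtain ⟨k, q, hk, hq, hφt, hφi⟩ := hasFDerivAt_coneCutoff (x₀ := x₀) (r := r) (x, t)
  have hφ : HasFDerivAt (coneCutoff x₀ r) (fderiv ℝ (coneCutoff x₀ r) (x, t)) (x, t) :=
    ((contDiff_coneCutoff.differentiable one_ne_zero) _).hasFDerivAt
  have hG := fun w => hasFDerivAt_stDeriv hU.contDiffOn w x ht
  have hsum := HasFDerivAt.fun_sum (u := Finset.univ)
    fun (i : Fin n) _ => (hG (EuclideanSpace.single i 1, 0)).pow 2
  have hE := (hφ.mul (((hG (0, 1)).pow 2).add hsum)).fderiv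
  have hE' : fderiv ℝ (coneEnergyDensity U x₀ r) (x, t) (0, 1) =
      -k * (stDeriv U (0, 1) (x, t) ^ 2 +
          ∑ i : Fin n, stDeriv U (EuclideanSpace.single i 1, 0) (x, t) ^ 2) +
        coneCutoff x₀ r (x, t) * (2 * stDeriv U (0, 1) (x, t) *
          fderiv ℝ (stDeriv U (0, 1)) (x, t) (0, 1) +
          ∑ i : Fin n, 2 * stDeriv U (EuclideanSpace.single i 1, 0) (x, t) *
            fderiv ℝ (stDeriv U (0, 1)) (x, t) (EuclideanSpace.single i 1, 0)) := by
    refine (congrArg (fun L : EuclideanSpace ℝ (Fin n) × ℝ →L[ℝ] ℝ => L (0, 1)) hE).trans ?_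
    simp only [fderiv_stDeriv_comm hU.contDiffOn (0, 1) _ x ht]
    simp [hφt]
    ring
  have hF : ∀ i : Fin n,
      fderiv ℝ (coneFlux U x₀ r i) (x, t) (EuclideanSpace.single i 1, 0) =
      -(k * q i) * (stDeriv U (0, 1) (x, t) * stDeriv U (EuclideanSpace.single i 1, 0) (x, t)) +
        coneCutoff x₀ r (x, t) *
          (fderiv ℝ (stDeriv U (0, 1)) (x, t) (EuclideanSpace.single i 1, 0) *
              stDeriv U (EuclideanSpace.single i 1, 0) (x, t) +
            stDeriv U (0, 1) (x, t) * fderiv ℝ (stDeriv U (EuclideanSpace.single i 1, 0)) (x, t)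
              (EuclideanSpace.single i 1, 0)) := by
    intro i
    have := (hφ.mul ((hG (0, 1)).mul (hG (EuclideanSpace.single i 1, 0)))).fderiv
    refine (congrArg (fun L : EuclideanSpace ℝ (Fin n) × ℝ →L[ℝ] ℝ =>
      L (EuclideanSpace.single i 1, 0)) this).trans ?_
    simp [hφi]
    ring
  rw [hE']
  simp only [hF]
  exact energy_flux_nonpos hk (expNegInvGlue.nonneg _) hq (hU.eqn x t ht)

theorem norm_sub_ge_of_far {x : EuclideanSpace ℝ (Fin n)} (hx : ‖x₀‖ + r < ‖x‖) :
    r ≤ ‖x - x₀‖ := by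
  linarith [norm_sub_norm_le x x₀]

theorem coneEnergyDensity_eq_zero (hU : IsDampedWave U)
    (h0 : ∀ x, ‖x - x₀‖ < r → ∀ w, stDeriv U w (x, 0) = 0) {T : ℝ}
    (x : EuclideanSpace ℝ (Fin n)) {t : ℝ} (ht : t ∈ Icc 0 T) :
    coneEnergyDensity U x₀ r (x, t) = 0 := by
  have hs : ∀ x, ∀ t ∈ Icc 0 T, ‖x₀‖ + r < ‖x‖ → coneEnergyDensity U x₀ r (x, t) = 0 :=
    fun x t ht hx => by
      rw [coneEnergyDensity, coneCutoff_eq_zero ht.1 (norm_sub_ge_of_far hx), zero_mul]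
  have hsF : ∀ i, ∀ x, ∀ t ∈ Icc 0 T, ‖x₀‖ + r < ‖x‖ → coneFlux U x₀ r i (x, t) = 0 :=
    fun i x t ht hx => by
      rw [coneFlux, coneCutoff_eq_zero ht.1 (norm_sub_ge_of_far hx), zero_mul]
  have hpos : (univ : Set (EuclideanSpace ℝ (Fin n))) ×ˢ Ioi (0 : ℝ) ⊆ univ ×ˢ Ici 0 :=
    prod_mono_right Ioi_subset_Ici_self
  have hcd := contDiffOn_coneEnergyDensity (x₀ := x₀) (r := r) hU.contDiffOn
  have hcF := fun i => (contDiffOn_coneFlux (x₀ := x₀) (r := r) hU.contDiffOn i).mono hpos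
  have hnn : ∀ p, 0 ≤ coneEnergyDensity U x₀ r p := fun p =>
    mul_nonneg (expNegInvGlue.nonneg _)
      (add_nonneg (sq_nonneg _) (Finset.sum_nonneg fun _ _ => sq_nonneg _))
  have hanti : AntitoneOn (fun t => ∫ x, coneEnergyDensity U x₀ r (x, t)) (Icc 0 T) := by
    refine antitoneOn_of_deriv_nonpos (convex_Icc 0 T)
      (continuousOn_integral_slice hcd.continuousOn hs) ?_ ?_ <;> rw [interior_Icc]
    · exact fun s hs' => (hasDerivAt_integral_slice (hcd.mono hpos) hs
        hs').differentiableAt.differentiableWithinAt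
    · intro s hs'
      rw [(hasDerivAt_integral_slice (hcd.mono hpos) hs hs').deriv]
      have hflux : ∫ x, 2 * ∑ i, fderiv ℝ (coneFlux U x₀ r i) (x, s)
          (EuclideanSpace.single i 1, 0) = 0 := by
        rw [integral_const_mul, integral_finsetSum _ fun i _ =>
          integrable_fderiv_slice (hcF i) (hsF i) hs' _]
        simp [integral_space_deriv_eq_zero (hcF _) (hsF _) hs']
      have hle := integral_nonpos (μ := volume) fun x =>
        fderiv_coneEnergyDensity_le (x₀ := x₀) (r := r) hU x hs'.1
      rwa [integral_sub (integrable_fderiv_slice (hcd.mono hpos) hs hs' _)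
        ((integrable_finsetSum _ fun i _ =>
          integrable_fderiv_slice (hcF i) (hsF i) hs' _).const_mul 2), hflux, sub_zero] at hle
  have hT : (0 : ℝ) ≤ T := ht.1.trans ht.2
  have hzero : ∫ x, coneEnergyDensity U x₀ r (x, 0) = 0 := by
    refine integral_eq_zero_of_ae (.of_forall fun x => ?_)
    rcases lt_or_ge ‖x - x₀‖ r with hx | hx
    · simp [coneEnergyDensity, h0 x hx]
    · simp [coneEnergyDensity, coneCutoff_eq_zero le_rfl hx]
  have hle : ∫ x, coneEnergyDensity U x₀ r (x, t) ≤ 0 :=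
    hzero ▸ hanti (left_mem_Icc.2 hT) ht ht.1
  have hcont : Continuous fun x => coneEnergyDensity U x₀ r (x, t) :=
    continuousOn_univ.1 <| hcd.continuousOn.comp (f := fun x => (x, t)) (by fun_prop)
      fun x _ => mk_mem_prod (mem_univ x) ht.1
  have hint := hcont.integrable_of_hasCompactSupport (μ := volume) (hasCompactSupport_slice hs ht)
  have hae := (integral_eq_zero_iff_of_nonneg (fun x => hnn (x, t)) hint).1
    (le_antisymm hle (integral_nonneg fun x => hnn (x, t)))
  exact congrFun ((hcont.ae_eq_iff_eq volume continuous_const).1 hae) x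

theorem stDeriv_eq_zero_of_cone (hU : IsDampedWave U) {T : ℝ}
    (h0 : ∀ x, ‖x - x₀‖ < T + 2 → ∀ w, stDeriv U w (x, 0) = 0) {t : ℝ} (ht : t ∈ Icc 0 T) :
    stDeriv U (0, 1) (x₀, t) = 0 ∧
      ∀ i : Fin n, stDeriv U (EuclideanSpace.single i 1, 0) (x₀, t) = 0 := by
  have h := coneEnergyDensity_eq_zero hU h0 x₀ ht
  have hφ : coneCutoff x₀ (T + 2) (x₀, t) ≠ 0 := by
    refine (expNegInvGlue.pos_of_pos ?_).ne'
    simp only [conePhase, sub_self, norm_zero]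
    norm_num
    linarith [ht.2]
  rw [coneEnergyDensity, mul_eq_zero_iff_left hφ] at h
  have hs : 0 ≤ ∑ i : Fin n, stDeriv U (EuclideanSpace.single i 1, 0) (x₀, t) ^ 2 :=
    Finset.sum_nonneg fun _ _ => sq_nonneg _
  have h1 := (add_eq_zero_iff_of_nonneg (sq_nonneg _) hs).1 h
  refine ⟨by simpa using h1.1, fun i => ?_⟩
  simpa using (Finset.sum_eq_zero_iff_of_nonneg fun _ _ => sq_nonneg _).1 h1.2 i (Finset.mem_univ i)

theorem eq_zero_of_cone (hU : IsDampedWave U) {T : ℝ}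
    (h0 : ∀ x, ‖x - x₀‖ < T + 2 → ∀ w, stDeriv U w (x, 0) = 0) {t : ℝ} (ht : t ∈ Icc 0 T)
    (hx : U (x₀, 0) = 0) : U (x₀, t) = 0 := by
  have hc : ContinuousOn (fun s => U (x₀, s)) (Icc 0 t) :=
    hU.contDiffOn.continuousOn.comp (f := fun s => (x₀, s)) (by fun_prop)
      fun s hs => mk_mem_prod (mem_univ _) hs.1
  have h2 := constant_of_has_deriv_right_zero hc (fun s hs => ?_) t ⟨ht.1, le_rfl⟩
  · rw [h2, hx]
  · have hst := (stDeriv_eq_zero_of_cone hU h0 ⟨hs.1, hs.2.le.trans ht.2⟩).1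
    rcases hs.1.eq_or_lt with rfl | hs0
    · have hd : HasDerivWithinAt (fun s : ℝ => (x₀, s)) (0, 1) (Ici 0) 0 :=
        ((hasDerivAt_const (0 : ℝ) x₀).prodMk (hasDerivAt_id (0 : ℝ))).hasDerivWithinAt
      exact ((hasFDerivWithinAt_slab hU.contDiffOn x₀).comp_hasDerivWithinAt (0 : ℝ) hd
        (fun s hs => mk_mem_prod (mem_univ x₀) hs)).congr_deriv hst
    · exact (hasDerivAt_time_stDeriv hU.contDiffOn x₀ hs0).hasDerivWithinAt.congr_deriv hst

end ConeEnergy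

section FourierModes

/-- The character `x ↦ exp (-2πi ⟨x, ξ⟩)`. -/
def fourierMode (ξ x : EuclideanSpace ℝ (Fin n)) : ℂ :=
  Complex.exp (((-2 * π * inner ℝ x ξ : ℝ) : ℂ) * Complex.I)

theorem hasFDerivAt_fourierMode (ξ x : EuclideanSpace ℝ (Fin n)) :
    HasFDerivAt (fourierMode ξ) (fourierMode ξ x • (((-2 * π : ℝ) : ℂ) * Complex.I) •
      (Complex.ofRealCLM.comp (innerSL ℝ ξ))) x := by
  have h1 : HasFDerivAt (fun x : EuclideanSpace ℝ (Fin n) =>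
      ((-2 * π * inner ℝ x ξ : ℝ) : ℂ) * Complex.I)
      ((((-2 * π : ℝ) : ℂ) * Complex.I) • (Complex.ofRealCLM.comp (innerSL ℝ ξ))) x := by
    have h2 := ((Complex.ofRealCLM.comp (innerSL ℝ ξ)).hasFDerivAt (x := x)).const_mul
      (((-2 * π : ℝ) : ℂ) * Complex.I)
    refine h2.congr_of_eventuallyEq (.of_forall fun y => ?_)
    simp [real_inner_comm ξ y]
    ring
  exact h1.cexp

theorem contDiff_fourierMode (ξ : EuclideanSpace ℝ (Fin n)) : ContDiff ℝ 1 (fourierMode ξ) := by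
  refine ContDiff.cexp (ContDiff.mul ?_ contDiff_const)
  exact Complex.ofRealCLM.contDiff.comp (contDiff_const.mul (contDiff_id.inner ℝ contDiff_const))

/-- A space-time function multiplied by a Fourier character in space. -/
def modulate (ξ : EuclideanSpace ℝ (Fin n)) (H : EuclideanSpace ℝ (Fin n) × ℝ → ℝ)
    (p : EuclideanSpace ℝ (Fin n) × ℝ) : ℂ :=
  fourierMode ξ p.1 * (H p : ℂ)

variable {H : EuclideanSpace ℝ (Fin n) × ℝ → ℝ} {R T : ℝ}

theorem contDiffOn_modulate {s : Set (EuclideanSpace ℝ (Fin n) × ℝ)} (hH : ContDiffOn ℝ 1 H s)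
    (ξ : EuclideanSpace ℝ (Fin n)) : ContDiffOn ℝ 1 (modulate ξ H) s :=
  ((contDiff_fourierMode ξ).comp contDiff_fst).contDiffOn.mul
    (Complex.ofRealCLM.contDiff.comp_contDiffOn hH)

theorem modulate_eq_zero (hs : ∀ x, ∀ t ∈ Icc 0 T, R < ‖x‖ → H (x, t) = 0)
    (ξ : EuclideanSpace ℝ (Fin n)) :
    ∀ x, ∀ t ∈ Icc 0 T, R < ‖x‖ → modulate ξ H (x, t) = 0 := fun x t ht hx => by
  simp [modulate, hs x t ht hx]

theorem fderiv_modulate (hH : ContDiffOn ℝ 1 H (univ ×ˢ Ioi 0))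
    (ξ x v : EuclideanSpace ℝ (Fin n)) {t : ℝ} (ht : 0 < t) (s : ℝ) :
    fderiv ℝ (modulate ξ H) (x, t) (v, s) =
      modulate ξ (fun p => fderiv ℝ H p (v, s)) (x, t) -
        2 * π * Complex.I * (inner ℝ ξ v : ℝ) * modulate ξ H (x, t) := by
  have h1 : HasFDerivAt H (fderiv ℝ H (x, t)) (x, t) :=
    ((contDiffAt_of_contDiffOn_pos hH x ht).differentiableAt one_ne_zero).hasFDerivAt
  have h2 := Complex.ofRealCLM.hasFDerivAt.comp (x, t) h1
  have h3 := (hasFDerivAt_fourierMode ξ x).comp (x, t)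
    (hasFDerivAt_fst (𝕜 := ℝ) (p := ((x, t) : EuclideanSpace ℝ (Fin n) × ℝ)))
  refine (congrArg (fun L : EuclideanSpace ℝ (Fin n) × ℝ →L[ℝ] ℂ => L (v, s))
    (h3.mul h2).fderiv).trans ?_
  simp [modulate]
  ring

/-- The `ξ`-mode of `H` at time `t`. -/
def modeCoeff (ξ : EuclideanSpace ℝ (Fin n)) (H : EuclideanSpace ℝ (Fin n) × ℝ → ℝ) (t : ℝ) : ℂ :=
  ∫ x, modulate ξ H (x, t)

theorem integrable_modulate (hH : ContDiffOn ℝ 1 H (univ ×ˢ Ioi 0))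
    (hs : ∀ x, ∀ t ∈ Icc 0 T, R < ‖x‖ → H (x, t) = 0) (ξ : EuclideanSpace ℝ (Fin n)) {t : ℝ}
    (ht : t ∈ Ioo 0 T) : Integrable (fun x => modulate ξ H (x, t)) :=
  (contDiff_slice (contDiffOn_modulate hH ξ) ht.1).continuous.integrable_of_hasCompactSupport
    (hasCompactSupport_slice (modulate_eq_zero hs ξ) (Ioo_subset_Icc_self ht))

theorem integrable_modulate_fderiv (hH : ContDiffOn ℝ 1 H (univ ×ˢ Ioi 0))
    (hs : ∀ x, ∀ t ∈ Icc 0 T, R < ‖x‖ → H (x, t) = 0) (ξ : EuclideanSpace ℝ (Fin n)) {t : ℝ}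
    (ht : t ∈ Ioo 0 T) (v : EuclideanSpace ℝ (Fin n)) (s : ℝ) :
    Integrable (fun x => modulate ξ (fun p => fderiv ℝ H p (v, s)) (x, t)) := by
  have h1 := integrable_fderiv_slice (contDiffOn_modulate hH ξ) (modulate_eq_zero hs ξ) ht (v, s)
  simp only [fderiv_modulate hH ξ _ v ht.1 s] at h1
  have h2 := h1.add ((integrable_modulate hH hs ξ ht).const_mul
    (2 * π * Complex.I * (inner ℝ ξ v : ℝ)))
  refine h2.congr (.of_forall fun x => ?_)
  simp

theorem modeCoeff_space_deriv (hH : ContDiffOn ℝ 1 H (univ ×ˢ Ioi 0))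
    (hs : ∀ x, ∀ t ∈ Icc 0 T, R < ‖x‖ → H (x, t) = 0) (ξ v : EuclideanSpace ℝ (Fin n)) {t : ℝ}
    (ht : t ∈ Ioo 0 T) :
    modeCoeff ξ (fun p => fderiv ℝ H p (v, 0)) t =
      2 * π * Complex.I * (inner ℝ ξ v : ℝ) * modeCoeff ξ H t := by
  have h1 := integral_space_deriv_eq_zero (contDiffOn_modulate hH ξ) (modulate_eq_zero hs ξ) ht v
  simp only [fderiv_modulate hH ξ _ v ht.1 0] at h1
  rw [integral_sub (integrable_modulate_fderiv hH hs ξ ht v 0)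
    ((integrable_modulate hH hs ξ ht).const_mul _), integral_const_mul, sub_eq_zero] at h1
  exact h1

theorem hasDerivAt_modeCoeff (hH : ContDiffOn ℝ 1 H (univ ×ˢ Ioi 0))
    (hs : ∀ x, ∀ t ∈ Icc 0 T, R < ‖x‖ → H (x, t) = 0) (ξ : EuclideanSpace ℝ (Fin n)) {t : ℝ}
    (ht : t ∈ Ioo 0 T) :
    HasDerivAt (modeCoeff ξ H) (modeCoeff ξ (fun p => fderiv ℝ H p (0, 1)) t) t := by
  have h1 := hasDerivAt_integral_slice (contDiffOn_modulate hH ξ) (modulate_eq_zero hs ξ) ht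
  simp only [fderiv_modulate hH ξ _ 0 ht.1 1, inner_zero_right, Complex.ofReal_zero, mul_zero,
    zero_mul, sub_zero] at h1
  exact h1

theorem continuousOn_modeCoeff (hH : ContDiffOn ℝ 1 H (univ ×ˢ Ici 0)) {ρ : ℝ}
    (hs : ∀ T, ∀ x, ∀ t ∈ Icc 0 T, ρ + T < ‖x‖ → H (x, t) = 0)
    (ξ : EuclideanSpace ℝ (Fin n)) : ContinuousOn (modeCoeff ξ H) (Ici 0) := by
  intro t ht
  have h1 := continuousOn_integral_slice (contDiffOn_modulate hH ξ).continuousOn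
    (modulate_eq_zero (hs (t + 1)) ξ)
  refine (h1 t ⟨ht, by linarith⟩).mono_of_mem_nhdsWithin ?_
  exact inter_mem_nhdsWithin _ (Iic_mem_nhds (by linarith))

variable {U : EuclideanSpace ℝ (Fin n) × ℝ → ℝ}

theorem slab_support (hU : IsDampedWave U) (h0 : ∀ x, R < ‖x‖ → U (x, 0) = 0)
    (h1 : ∀ x, R < ‖x‖ → ∀ w, stDeriv U w (x, 0) = 0) (T : ℝ) (x : EuclideanSpace ℝ (Fin n))
    {t : ℝ} (ht : t ∈ Icc 0 T) (hx : R + 2 + T < ‖x‖) :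
    U (x, t) = 0 ∧ stDeriv U (0, 1) (x, t) = 0 ∧
      ∀ i : Fin n, stDeriv U (EuclideanSpace.single i 1, 0) (x, t) = 0 := by
  have h2 : ∀ y, ‖y - x‖ < T + 2 → ∀ w, stDeriv U w (y, 0) = 0 := fun y hy =>
    h1 y (by linarith [norm_sub_norm_le x y, norm_sub_rev x y])
  exact ⟨eq_zero_of_cone hU h2 ht (h0 x (by linarith [ht.1.trans ht.2])),
    stDeriv_eq_zero_of_cone hU h2 ht⟩

theorem sum_inner_single_sq (ξ : EuclideanSpace ℝ (Fin n)) :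
    ∑ i : Fin n, (inner ℝ ξ (EuclideanSpace.single i (1 : ℝ))) ^ 2 = ‖ξ‖ ^ 2 := by
  rw [EuclideanSpace.norm_sq_eq]
  simp [EuclideanSpace.inner_single_right]

theorem hasDerivAt_modeCoeff_wave (hU : IsDampedWave U) (h0 : ∀ x, R < ‖x‖ → U (x, 0) = 0)
    (h1 : ∀ x, R < ‖x‖ → ∀ w, stDeriv U w (x, 0) = 0) (ξ : EuclideanSpace ℝ (Fin n)) {t : ℝ}
    (ht : 0 < t) :
    HasDerivAt (modeCoeff ξ U) (modeCoeff ξ (stDeriv U (0, 1)) t) t ∧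
    HasDerivAt (modeCoeff ξ (stDeriv U (0, 1)))
      (-modeCoeff ξ (stDeriv U (0, 1)) t - (4 * π ^ 2 * ‖ξ‖ ^ 2 : ℝ) * modeCoeff ξ U t) t := by
  have htT : t ∈ Ioo 0 (t + 1) := ⟨ht, by linarith⟩
  have hs := slab_support hU h0 h1 (t + 1)
  have hsU : ∀ x, ∀ s ∈ Icc 0 (t + 1), R + 2 + (t + 1) < ‖x‖ → U (x, s) = 0 :=
    fun x s hs' hx => (hs x hs' hx).1
  have hsT : ∀ x, ∀ s ∈ Icc 0 (t + 1), R + 2 + (t + 1) < ‖x‖ → stDeriv U (0, 1) (x, s) = 0 :=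
    fun x s hs' hx => (hs x hs' hx).2.1
  have hsI : ∀ i : Fin n, ∀ x, ∀ s ∈ Icc 0 (t + 1), R + 2 + (t + 1) < ‖x‖ →
      stDeriv U (EuclideanSpace.single i 1, 0) (x, s) = 0 :=
    fun i x s hs' hx => (hs x hs' hx).2.2 i
  have hc := contDiffOn_one_pos hU.contDiffOn
  have hcw := contDiffOn_stDeriv_pos hU.contDiffOn
  have hmode : ∀ w, modeCoeff ξ (fun p => fderiv ℝ U p w) t = modeCoeff ξ (stDeriv U w) t := by
    intro w
    simp only [modeCoeff, modulate, stDeriv_eq_fderiv _ _ ht]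
  refine ⟨by simpa [hmode] using hasDerivAt_modeCoeff hc hsU ξ htT, ?_⟩
  convert hasDerivAt_modeCoeff (hcw (0, 1)) hsT ξ htT using 1
  have hpde : ∀ x, modulate ξ (fun p => fderiv ℝ (stDeriv U (0, 1)) p (0, 1)) (x, t) =
      ∑ i : Fin n, modulate ξ (fun p => fderiv ℝ (stDeriv U (EuclideanSpace.single i 1, 0)) p
        (EuclideanSpace.single i 1, 0)) (x, t) - modulate ξ (stDeriv U (0, 1)) (x, t) := by
    intro x
    have := hU.eqn x t ht
    simp only [modulate]
    rw [← Finset.mul_sum, ← mul_sub, ← Complex.ofReal_sum, ← Complex.ofReal_sub]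
    congr 2
    linarith
  rw [modeCoeff.eq_def ξ (fun p => fderiv ℝ (stDeriv U (0, 1)) p (0, 1))]
  simp only [hpde]
  rw [integral_sub (integrable_finsetSum _ fun i _ =>
    integrable_modulate_fderiv (hcw _) (hsI i) ξ htT _ _) (integrable_modulate (hcw _) hsT ξ htT),
    integral_finsetSum _ fun i _ => integrable_modulate_fderiv (hcw _) (hsI i) ξ htT _ _]
  have hterm : ∀ i : Fin n, ∫ x, modulate ξ (fun p =>
      fderiv ℝ (stDeriv U (EuclideanSpace.single i 1, 0)) p (EuclideanSpace.single i 1, 0)) (x, t) =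
      ((-(4 * π ^ 2) * (inner ℝ ξ (EuclideanSpace.single i (1 : ℝ))) ^ 2 : ℝ) : ℂ) *
        modeCoeff ξ U t := by
    intro i
    refine (modeCoeff_space_deriv (hcw _) (hsI i) ξ _ htT).trans ?_
    rw [← hmode, modeCoeff_space_deriv hc hsU ξ _ htT]
    push_cast
    linear_combination (4 * π ^ 2 * (inner ℝ ξ (EuclideanSpace.single i (1 : ℝ)) : ℂ) ^ 2 *
      modeCoeff ξ U t) * Complex.I_sq
  simp only [hterm]
  rw [← Finset.sum_mul, ← Complex.ofReal_sum, ← Finset.mul_sum, sum_inner_single_sq]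
  simp only [modeCoeff]
  push_cast
  ring

end FourierModes

section DampedOscillator

theorem le_exp_mul_of_hasDerivAt_le {y y' : ℝ → ℝ} {c : ℝ} (hc : ContinuousOn y (Ici 0))
    (hd : ∀ t > 0, HasDerivAt y (y' t) t) (hle : ∀ t > 0, y' t ≤ -c * y t) {t : ℝ} (ht : 0 ≤ t) :
    y t ≤ exp (-c * t) * y 0 := by
  have hE : ∀ s : ℝ, HasDerivAt (fun s : ℝ => exp (c * s)) (exp (c * s) * c) s := fun s => by
    simpa using ((hasDerivAt_id s).const_mul c).exp
  have hanti : AntitoneOn (fun s => exp (c * s) * y s) (Ici 0) := by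
    refine antitoneOn_of_deriv_nonpos (convex_Ici 0)
      ((Continuous.continuousOn (by fun_prop)).mul hc) ?_ ?_ <;> rw [interior_Ici]
    · exact fun s hs => ((hE s).mul (hd s hs)).differentiableAt.differentiableWithinAt
    · intro s hs
      rw [((hE s).fun_mul (hd s hs)).deriv]
      nlinarith [mul_le_mul_of_nonneg_left (hle s hs) (exp_pos (c * s)).le]
  have h := hanti (mem_Ici.2 le_rfl) (mem_Ici.2 ht) ht
  simp only [mul_zero, exp_zero, one_mul] at h
  calc y t = exp (-c * t) * (exp (c * t) * y t) := by rw [← mul_assoc, ← exp_add]; simp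
    _ ≤ _ := mul_le_mul_of_nonneg_left h (exp_pos _).le

variable {H : Type*} [NormedAddCommGroup H] [InnerProductSpace ℝ H]

theorem eq_exp_smul_of_hasDerivAt {z : ℝ → H} {l : ℝ} (hc : ContinuousOn z (Ici 0))
    (hd : ∀ t > 0, HasDerivAt z (-l • z t) t) {t : ℝ} (ht : 0 ≤ t) :
    z t = exp (-l * t) • z 0 := by
  have hE : ∀ s : ℝ, HasDerivAt (fun s : ℝ => exp (-l * s) • z 0) (-l • (exp (-l * s) • z 0)) s :=
    fun s => by
      have := (((hasDerivAt_id s).const_mul (-l)).exp).smul_const (z 0)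
      simpa [smul_smul, mul_comm] using this
  have h := le_exp_mul_of_hasDerivAt_le (y := fun s => ‖z s - exp (-l * s) • z 0‖ ^ 2) (c := 2 * l)
    ((hc.sub (Continuous.continuousOn (by fun_prop))).norm.pow 2)
    (fun s hs => ((hd s hs).sub (hE s)).norm_sq) (fun s _ => le_of_eq ?_) ht
  · have h0 : ‖z t - exp (-l * t) • z 0‖ ^ 2 ≤ 0 := by simpa using h
    have h1 : ‖z t - exp (-l * t) • z 0‖ = 0 := by
      simpa using le_antisymm h0 (sq_nonneg _)
    exact sub_eq_zero.1 (norm_eq_zero.1 h1)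
  · simp only [Pi.sub_apply]
    rw [← smul_sub, inner_smul_right, real_inner_self_eq_norm_sq]
    ring

variable {w v : ℝ → H} {ρ : ℝ}

theorem damped_oscillator_formula (hw : ContinuousOn w (Ici 0)) (hv : ContinuousOn v (Ici 0))
    (hdw : ∀ t > 0, HasDerivAt w (v t) t) (hdv : ∀ t > 0, HasDerivAt v (-v t - ρ • w t) t)
    {a b : ℝ} (hab : a + b = 1) (hρ : a * b = ρ) {t : ℝ} (ht : 0 ≤ t) :
    (b - a) • w t = exp (-a * t) • (v 0 + b • w 0) - exp (-b * t) • (v 0 + a • w 0) := by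
  have key : ∀ a b : ℝ, a + b = 1 → a * b = ρ →
      v t + b • w t = exp (-a * t) • (v 0 + b • w 0) := by
    intro a b hab hρ
    refine eq_exp_smul_of_hasDerivAt (z := fun s => v s + b • w s) (hv.add (hw.const_smul b))
      (fun s hs => ((hdv s hs).add ((hdw s hs).const_smul b)).congr_deriv ?_) ht
    obtain rfl : b = 1 - a := by linarith
    rw [← hρ]
    module
  rw [← key a b hab hρ, ← key b a (by linarith) (by linarith)]
  module

theorem damped_oscillator_decay (hw : ContinuousOn w (Ici 0)) (hv : ContinuousOn v (Ici 0))
    (hdw : ∀ t > 0, HasDerivAt w (v t) t) (hdv : ∀ t > 0, HasDerivAt v (-v t - ρ • w t) t)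
    {θ : ℝ} (hθ : 0 < θ) (hθ1 : θ ≤ 1 / 2) (hθρ : θ ≤ ρ) {t : ℝ} (ht : 0 ≤ t) :
    ‖w t‖ ≤ 2 / θ * exp (-(θ / 4) * t) * (2 * ‖v 0‖ + (1 + ρ) * ‖w 0‖) := by
  have hsq : ∀ (κ s : ℝ), 0 ≤ ‖v s‖ ^ 2 + 2 * κ * inner ℝ (w s) (v s) + κ ^ 2 * ‖w s‖ ^ 2 := by
    intro κ s
    have h := sq_nonneg ‖v s + κ • w s‖
    rw [norm_add_sq_real, inner_smul_right, norm_smul, mul_pow, norm_eq_abs, sq_abs,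
      real_inner_comm] at h
    linarith
  have h := le_exp_mul_of_hasDerivAt_le (c := θ / 2)
    (y := fun s => ‖v s‖ ^ 2 + ρ * ‖w s‖ ^ 2 + θ * inner ℝ (w s) (v s))
    (((hv.norm.pow 2).add (continuousOn_const.mul (hw.norm.pow 2))).add
      (continuousOn_const.mul (hw.inner hv)))
    (fun s hs => ((hdv s hs).norm_sq.add ((hdw s hs).norm_sq.const_mul ρ)).add
      (((hdw s hs).inner ℝ (hdv s hs)).const_mul θ)) (fun s _ => ?_) ht
  · have hlow : ρ / 2 * ‖w t‖ ^ 2 ≤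
        ‖v t‖ ^ 2 + ρ * ‖w t‖ ^ 2 + θ * inner ℝ (w t) (v t) := by
      have h1 : (θ / 2) ^ 2 ≤ ρ / 2 := by nlinarith
      nlinarith [hsq (θ / 2) t, mul_le_mul_of_nonneg_right h1 (sq_nonneg ‖w t‖)]
    have hup : ‖v 0‖ ^ 2 + ρ * ‖w 0‖ ^ 2 + θ * inner ℝ (w 0) (v 0) ≤
        (2 * ‖v 0‖ + (1 + ρ) * ‖w 0‖) ^ 2 := by
      have h1 : θ * inner ℝ (w 0) (v 0) ≤ ‖w 0‖ * ‖v 0‖ := by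
        have := real_inner_le_norm (w 0) (v 0)
        have h3 : 0 ≤ ‖w 0‖ * ‖v 0‖ := by positivity
        nlinarith
      have h2 : 0 ≤ ρ := by linarith
      have h3 : 0 ≤ ‖w 0‖ * ‖v 0‖ := by positivity
      nlinarith [sq_nonneg ‖v 0‖, sq_nonneg ‖w 0‖, mul_nonneg h2 h3,
        mul_nonneg h2 (sq_nonneg ‖w 0‖), mul_nonneg (sq_nonneg ρ) (sq_nonneg ‖w 0‖)]
    have hρ : 0 ≤ ρ := by linarith
    refine abs_le_of_sq_le_sq' ?_ (by positivity) |>.2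
    have hexp : exp (-(θ / 4) * t) ^ 2 = exp (-(θ / 2) * t) := by
      rw [← exp_nat_mul]; congr 1; push_cast; ring
    rw [mul_pow, mul_pow, hexp]
    have hA : 0 ≤ exp (-(θ / 2) * t) * (2 * ‖v 0‖ + (1 + ρ) * ‖w 0‖) ^ 2 := by positivity
    have h4 : θ / 2 * ‖w t‖ ^ 2 ≤
        exp (-(θ / 2) * t) * (2 * ‖v 0‖ + (1 + ρ) * ‖w 0‖) ^ 2 := by
      calc θ / 2 * ‖w t‖ ^ 2 ≤ ρ / 2 * ‖w t‖ ^ 2 := by gcongr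
        _ ≤ _ := hlow
        _ ≤ _ := h
        _ ≤ _ := by gcongr
    calc ‖w t‖ ^ 2 = 2 / θ * (θ / 2 * ‖w t‖ ^ 2) := by field_simp
      _ ≤ 2 / θ * (exp (-(θ / 2) * t) * (2 * ‖v 0‖ + (1 + ρ) * ‖w 0‖) ^ 2) := by gcongr
      _ ≤ (2 / θ) ^ 2 * (exp (-(θ / 2) * t) * (2 * ‖v 0‖ + (1 + ρ) * ‖w 0‖) ^ 2) := by
        refine mul_le_mul_of_nonneg_right (le_self_pow₀ ?_ two_ne_zero) hA
        rw [le_div_iff₀ hθ]; linarith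
      _ = _ := by ring
  · simp only [inner_sub_right, inner_neg_right, inner_smul_right, real_inner_self_eq_norm_sq,
      real_inner_comm (w s) (v s)]
    have h1 := hsq (θ * (1 - θ / 2) / 2) s
    have h2 : (θ * (1 - θ / 2) / 2) ^ 2 ≤ θ * ρ / 2 := by
      have h3 : (1 - θ / 2) ^ 2 ≤ 1 := by nlinarith
      nlinarith [mul_le_mul_of_nonneg_left h3 (sq_nonneg θ), mul_le_mul_of_nonneg_left hθρ hθ.le]
    nlinarith [mul_le_mul_of_nonneg_right h2 (sq_nonneg ‖w s‖),
      mul_nonneg (by linarith : (0 : ℝ) ≤ 1 - 3 * θ / 2) (sq_nonneg ‖v s‖)]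

end DampedOscillator

section GaussianMoments

variable {V : Type*} [NormedAddCommGroup V] [InnerProductSpace ℝ V] [FiniteDimensional ℝ V]
  [MeasurableSpace V] [BorelSpace V]

theorem integrable_exp_neg_mul_sq_norm {b : ℝ} (hb : 0 < b) :
    Integrable (fun v : V => exp (-b * ‖v‖ ^ 2)) := by
  have h := (GaussianFourier.integrable_cexp_neg_mul_sq_norm_add (b := (b : ℂ)) (by simpa) 0
    (0 : V)).norm
  refine h.congr (Eventually.of_forall fun v => ?_)
  simp [Complex.norm_exp, ← Complex.ofReal_pow]

theorem integrable_norm_pow_mul_exp_neg_mul_sq_norm {b : ℝ} (hb : 0 < b) (j : ℕ) :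
    Integrable (fun v : V => ‖v‖ ^ j * exp (-b * ‖v‖ ^ 2)) := by
  refine ((integrable_exp_neg_mul_sq_norm (half_pos hb)).const_mul
    ((2 / b) ^ j * j ! * exp (b / 2))).mono' (Continuous.aestronglyMeasurable (by fun_prop))
    (Eventually.of_forall fun v => ?_)
  rw [norm_of_nonneg (by positivity)]
  have h1 : (b / 2 * (1 + ‖v‖ ^ 2)) ^ j ≤ j ! * exp (b / 2 * (1 + ‖v‖ ^ 2)) := by
    have := pow_div_factorial_le_exp (b / 2 * (1 + ‖v‖ ^ 2)) (by positivity) j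
    rwa [div_le_iff₀' (by positivity)] at this
  have h2 : ‖v‖ ^ j ≤ (1 + ‖v‖ ^ 2) ^ j := by
    gcongr
    nlinarith [sq_nonneg (‖v‖ - 1), norm_nonneg v]
  have h3 : (1 + ‖v‖ ^ 2) ^ j = (2 / b) ^ j * (b / 2 * (1 + ‖v‖ ^ 2)) ^ j := by
    rw [← mul_pow]; congr 1; field_simp
  calc ‖v‖ ^ j * exp (-b * ‖v‖ ^ 2)
      ≤ (2 / b) ^ j * (j ! * exp (b / 2 * (1 + ‖v‖ ^ 2))) * exp (-b * ‖v‖ ^ 2) := by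
        gcongr
        calc _ ≤ _ := h2
          _ = _ := h3
          _ ≤ _ := by gcongr
    _ = (2 / b) ^ j * j ! * (exp (b / 2 * (1 + ‖v‖ ^ 2)) * exp (-b * ‖v‖ ^ 2)) := by ring
    _ = (2 / b) ^ j * j ! * (exp (b / 2) * exp (-(b / 2) * ‖v‖ ^ 2)) := by
        rw [← exp_add, ← exp_add]; congr 2; ring
    _ = _ := by ring

theorem integral_cos_mul_gaussian {b : ℝ} (hb : 0 < b) (y : V) :
    ∫ v : V, cos (2 * π * inner ℝ v y) * exp (-b * ‖v‖ ^ 2) =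
      (∫ v : V, exp (-b * ‖v‖ ^ 2)) * exp (-π ^ 2 * ‖y‖ ^ 2 / b) := by
  have h := fourier_gaussian_innerProductSpace (V := V) (b := (b : ℂ)) (by simpa) y
  rw [← GaussianFourier.integral_cexp_neg_mul_sq_norm (V := V) (b := (b : ℂ)) (by simpa),
    Real.fourier_eq'] at h
  have h1 : ∀ v : V, Complex.exp (-(b : ℂ) * (‖v‖ : ℂ) ^ 2) = ((exp (-b * ‖v‖ ^ 2) : ℝ) : ℂ) :=
    fun v => by push_cast; rfl
  have h2 : Complex.exp (-(π : ℂ) ^ 2 * (‖y‖ : ℂ) ^ 2 / (b : ℂ)) =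
      ((exp (-π ^ 2 * ‖y‖ ^ 2 / b) : ℝ) : ℂ) := by push_cast; rfl
  simp only [h1, h2, smul_eq_mul] at h
  rw [integral_complex_ofReal, ← Complex.ofReal_mul] at h
  have hI : Integrable (fun v : V => Complex.exp (((-2 * π * inner ℝ v y : ℝ) : ℂ) * Complex.I) *
      ((exp (-b * ‖v‖ ^ 2) : ℝ) : ℂ)) := by
    refine (integrable_exp_neg_mul_sq_norm (V := V) hb).mono
      (Continuous.aestronglyMeasurable (by fun_prop)) (Eventually.of_forall fun v => ?_)
    rw [norm_mul, Complex.norm_exp_ofReal_mul_I, one_mul, Complex.norm_real]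
  have h3 := congrArg Complex.re h
  rw [Complex.ofReal_re, ← RCLike.re_eq_complex_re, ← integral_re hI] at h3
  rw [← h3]
  refine integral_congr_ae (Eventually.of_forall fun v => ?_)
  simp only [RCLike.re_eq_complex_re, Complex.re_mul_ofReal, Complex.exp_ofReal_mul_I_re]
  rw [show -2 * π * inner ℝ v y = -(2 * π * inner ℝ v y) by ring, cos_neg]

theorem integrable_one_sub_cos_mul_gaussian {b : ℝ} (hb : 0 < b) (y : V) :
    Integrable (fun v : V => (1 - cos (2 * π * inner ℝ v y)) * exp (-b * ‖v‖ ^ 2)) := by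
  refine ((integrable_exp_neg_mul_sq_norm hb).const_mul 2).mono'
    (Continuous.aestronglyMeasurable (by fun_prop)) (Eventually.of_forall fun v => ?_)
  rw [norm_mul, norm_of_nonneg (exp_pos _).le, norm_eq_abs]
  gcongr
  rw [abs_le]
  constructor <;> linarith [cos_le_one (2 * π * inner ℝ v y), neg_one_le_cos (2 * π * inner ℝ v y)]

theorem integral_one_sub_cos_mul_gaussian {b : ℝ} (hb : 0 < b) (y : V) :
    ∫ v : V, (1 - cos (2 * π * inner ℝ v y)) * exp (-b * ‖v‖ ^ 2) =
      (∫ v : V, exp (-b * ‖v‖ ^ 2)) * (1 - exp (-π ^ 2 * ‖y‖ ^ 2 / b)) := by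
  have hg := integrable_exp_neg_mul_sq_norm (V := V) hb
  have hc := hg.sub (integrable_one_sub_cos_mul_gaussian hb y)
  rw [mul_sub, mul_one, ← integral_cos_mul_gaussian hb, ← integral_sub hg]
  · congr 1; ext v; ring
  · exact hc.congr (Eventually.of_forall fun v => by simp only [Pi.sub_apply]; ring)

theorem integral_gaussian_pos {b : ℝ} (hb : 0 < b) : 0 < ∫ v : V, exp (-b * ‖v‖ ^ 2) := by
  rw [GaussianFourier.integral_rexp_neg_mul_sq_norm hb]
  positivity

theorem one_sub_cos_le_abs (z : ℝ) : 1 - cos z ≤ |z| := by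
  have h1 := one_sub_sq_div_two_le_cos (x := z)
  have h2 := neg_one_le_cos z
  have h3 := sq_abs z
  rcases le_total |z| 2 with h | h <;> nlinarith [abs_nonneg z]

theorem le_sixteen_mul_div_of_one_sub_exp_le {A r t τ : ℝ} (hA : 0 < A) (hr : 0 ≤ r) (hτ : 0 < τ)
    (ht : τ ^ 2 = t) (h1 : 2 * A ≤ τ ^ 3)
    (h3 : 1 - exp (-(r ^ 2 / (8 * t))) ≤ A / τ ^ 3)
    (h4 : 1 - exp (-(r ^ 2 / (8 * t))) ≤ A * r / τ ^ 4) : r ≤ 16 * A / t := by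
  have ht0 : 0 < t := by rw [← ht]; positivity
  set s := r ^ 2 / (8 * t) with hs
  have hs0 : 0 ≤ s := by positivity
  have he : exp (-s) * (1 + s) ≤ 1 := by
    calc exp (-s) * (1 + s) ≤ exp (-s) * exp s := by
          gcongr; linarith [add_one_le_exp s]
      _ = 1 := by rw [← exp_add]; simp
  have hhalf : A / τ ^ 3 ≤ 1 / 2 := by
    rw [div_le_iff₀ (by positivity)]; linarith
  have hs1 : s ≤ 1 := by nlinarith
  have hs2 : s / 2 ≤ A * r / τ ^ 4 := by nlinarith
  have hτ4 : τ ^ 4 = t ^ 2 := by rw [← ht]; ring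
  rw [hτ4, hs, le_div_iff₀ (by positivity)] at hs2
  rw [le_div_iff₀ ht0]
  have h5 : r ^ 2 / (8 * t) / 2 * t ^ 2 = r ^ 2 * t / 16 := by field_simp; ring
  rw [h5] at hs2
  rcases hr.eq_or_lt with h0 | h0
  · rw [← h0]; simp; positivity
  · nlinarith

theorem eventually_exp_neg_mul_sq_mul_pow_le {c : ℝ} (hc : 0 < c) (m : ℕ) :
    ∀ᶠ τ : ℝ in atTop, exp (-c * τ ^ 2) * τ ^ m ≤ 1 := by
  have h1 := tendsto_rpow_mul_exp_neg_mul_atTop_nhds_zero m c hc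
  filter_upwards [h1.eventually_lt_const one_pos, eventually_ge_atTop 1] with τ h hτ
  rw [rpow_natCast] at h
  refine le_trans ?_ h.le
  rw [mul_comm]
  gcongr ?_ * exp ?_
  nlinarith [mul_le_mul_of_nonneg_left hτ hc.le]

theorem spectral_integrand_ge {c₀ B c t k p : ℝ} (hp : 0 ≤ p) {w : ℂ}
    (hre : c₀ * exp (-(8 * π ^ 2 * k ^ 2) * t) - exp (-c * t) * p ≤ w.re)
    (him : |w.im| ≤ B * k ^ 3 * exp (-(4 * π ^ 2 * k ^ 2) * t) + exp (-c * t) * p)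
    {z S : ℝ} (hcos : 1 - cos z ≤ 2 * S) (hsin : |sin z| ≤ S) :
    c₀ * ((1 - cos z) * exp (-(8 * π ^ 2 * k ^ 2) * t)) -
      B * (S * k ^ 3 * exp (-(4 * π ^ 2 * k ^ 2) * t)) - 3 * exp (-c * t) * (S * p) ≤
      (1 - cos z) * w.re + sin z * w.im := by
  have h0 : 0 ≤ 1 - cos z := by linarith [cos_le_one z]
  have hP : 0 ≤ exp (-c * t) * p := by positivity
  have h1 := mul_le_mul_of_nonneg_left hre h0
  have h2 : |sin z * w.im| ≤
      S * (B * k ^ 3 * exp (-(4 * π ^ 2 * k ^ 2) * t) + exp (-c * t) * p) := by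
    rw [abs_mul]
    exact mul_le_mul hsin him (abs_nonneg _) ((abs_nonneg _).trans hsin)
  have h3 := neg_le_of_abs_le h2
  nlinarith [mul_le_mul_of_nonneg_right hcos hP]

variable {W : ℝ → V → ℂ} {Ψ : V → ℝ} {c₀ B c : ℝ}

theorem norm_le_div_of_spectral_bounds (hc₀ : 0 < c₀) (hB : 0 ≤ B) (hc : 0 < c)
    (hΨ : Integrable Ψ) (hΨ1 : Integrable fun ξ => ‖ξ‖ * Ψ ξ) (hΨ0 : ∀ ξ, 0 ≤ Ψ ξ)
    (hre : ∀ t ≥ 1, ∀ ξ,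
      c₀ * exp (-(8 * π ^ 2 * ‖ξ‖ ^ 2) * t) - exp (-c * t) * Ψ ξ ≤ (W t ξ).re)
    (him : ∀ t ≥ 1, ∀ ξ,
      |(W t ξ).im| ≤ B * ‖ξ‖ ^ 3 * exp (-(4 * π ^ 2 * ‖ξ‖ ^ 2) * t) + exp (-c * t) * Ψ ξ) :
    ∃ C > (0 : ℝ), ∃ T ≥ (1 : ℝ), ∀ t ≥ T, ∀ x : V,
      Integrable (fun ξ => (1 - cos (2 * π * inner ℝ ξ x)) * (W t ξ).re +
        sin (2 * π * inner ℝ ξ x) * (W t ξ).im) →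
      ∫ ξ, ((1 - cos (2 * π * inner ℝ ξ x)) * (W t ξ).re +
        sin (2 * π * inner ℝ ξ x) * (W t ξ).im) ≤ 0 → ‖x‖ ≤ C / t := by
  set N := Module.finrank ℝ V
  set G : V → V → ℝ := fun y v => (1 - cos (2 * π * inner ℝ v y)) * exp (-(8 * π ^ 2) * ‖v‖ ^ 2)
  set m : ℕ → V → ℝ := fun j v => ‖v‖ ^ j * exp (-(4 * π ^ 2) * ‖v‖ ^ 2)
  have hb8 : (0 : ℝ) < 8 * π ^ 2 := by positivity
  have hb4 : (0 : ℝ) < 4 * π ^ 2 := by positivity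
  have hGint : ∀ y, Integrable (G y) := fun y => integrable_one_sub_cos_mul_gaussian hb8 y
  have hmint : ∀ j, Integrable (m j) := integrable_norm_pow_mul_exp_neg_mul_sq_norm hb4
  have hm0 : ∀ j, 0 ≤ ∫ v, m j v := fun j => integral_nonneg fun v => by positivity
  set A₀ := ∫ v : V, exp (-(8 * π ^ 2) * ‖v‖ ^ 2)
  have hA₀ : 0 < A₀ := integral_gaussian_pos hb8
  have hI0 : 0 ≤ ∫ ξ, Ψ ξ := integral_nonneg hΨ0
  have hI1 : 0 ≤ ∫ ξ, ‖ξ‖ * Ψ ξ := integral_nonneg fun ξ => mul_nonneg (norm_nonneg _) (hΨ0 ξ)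
  set K := B * (∫ v, m 3 v) + 3 * (∫ ξ, Ψ ξ) +
    2 * π * (B * (∫ v, m 4 v) + 3 * ∫ ξ, ‖ξ‖ * Ψ ξ) + 1 with hK
  have hK3 : B * (∫ v, m 3 v) + 3 * (∫ ξ, Ψ ξ) ≤ K := by
    have := mul_nonneg hB (hm0 4)
    have : 0 ≤ 2 * π * (B * (∫ v, m 4 v) + 3 * ∫ ξ, ‖ξ‖ * Ψ ξ) := by positivity
    linarith
  have hK4 : 2 * π * (B * (∫ v, m 4 v) + 3 * ∫ ξ, ‖ξ‖ * Ψ ξ) ≤ K := by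
    have := mul_nonneg hB (hm0 3)
    linarith
  have hKpos : 0 < K := by
    have := mul_nonneg hB (hm0 3)
    have := mul_nonneg hB (hm0 4)
    positivity
  set A := K / (c₀ * A₀) with hA
  have hApos : 0 < A := by positivity
  obtain ⟨τ₀, hτ₀⟩ := eventually_atTop.1 ((eventually_exp_neg_mul_sq_mul_pow_le hc (N + 3)).and
    (eventually_exp_neg_mul_sq_mul_pow_le hc (N + 4)))
  set τ₁ := max τ₀ (max 1 (2 * A))
  have hτ₁ : 1 ≤ τ₁ := (le_max_left _ _).trans (le_max_right _ _)
  refine ⟨16 * A, by positivity, τ₁ ^ 2, one_le_pow₀ hτ₁, fun t ht x hint hle => ?_⟩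
  have ht1 : 1 ≤ t := (one_le_pow₀ hτ₁).trans ht
  obtain ⟨τ, hτ, hτt⟩ : ∃ τ ≥ τ₁, τ ^ 2 = t :=
    ⟨√t, le_sqrt_of_sq_le ht, sq_sqrt (by linarith)⟩
  have hτ1 : 1 ≤ τ := hτ₁.trans hτ
  have hτ0 : 0 < τ := by linarith
  obtain ⟨hexp3, hexp4⟩ := hτ₀ τ ((le_max_left _ _).trans hτ)
  rw [hτt] at hexp3 hexp4
  have hscale : ∀ F : V → ℝ, ∫ ξ, F (τ • ξ) = (τ ^ N)⁻¹ * ∫ v, F v := fun F => by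
    rw [Measure.integral_comp_smul_of_nonneg _ _ _ (hR := hτ0.le), smul_eq_mul]
  have hG : ∀ ξ, (1 - cos (2 * π * inner ℝ ξ x)) * exp (-(8 * π ^ 2 * ‖ξ‖ ^ 2) * t) =
      G (τ⁻¹ • x) (τ • ξ) := fun ξ => by
    simp only [G, real_inner_smul_left, real_inner_smul_right, norm_smul, norm_eq_abs,
      abs_of_pos hτ0]
    rw [inv_mul_cancel_left₀ hτ0.ne', ← hτt]
    congr 2; ring
  have hm : ∀ j ξ, ‖ξ‖ ^ j * exp (-(4 * π ^ 2 * ‖ξ‖ ^ 2) * t) = (τ ^ j)⁻¹ * m j (τ • ξ) :=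
    fun j ξ => by
    simp only [m, norm_smul, norm_eq_abs, abs_of_pos hτ0, mul_pow]
    rw [← mul_assoc, inv_mul_cancel_left₀ (by positivity), ← hτt]
    congr 2; ring
  have hGval : ∫ v, G (τ⁻¹ • x) v = A₀ * (1 - exp (-(‖x‖ ^ 2 / (8 * t)))) := by
    rw [integral_one_sub_cos_mul_gaussian hb8, norm_smul, norm_inv, norm_eq_abs, abs_of_pos hτ0,
      ← hτt]
    congr 3; field_simp
  have hGi := (hGint (τ⁻¹ • x)).comp_smul hτ0.ne'
  have hmi : ∀ j, Integrable fun ξ => m j (τ • ξ) := fun j => (hmint j).comp_smul hτ0.ne'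
  have key : ∀ (e : ℕ) (S : ℝ), 0 ≤ S → Integrable (fun ξ => ‖ξ‖ ^ e * Ψ ξ) →
      (∀ ξ : V, 1 - cos (2 * π * inner ℝ ξ x) ≤ 2 * (S * ‖ξ‖ ^ e)) →
      (∀ ξ : V, |sin (2 * π * inner ℝ ξ x)| ≤ S * ‖ξ‖ ^ e) →
      exp (-c * t) * τ ^ (N + (3 + e)) ≤ 1 →
      c₀ * A₀ * (1 - exp (-(‖x‖ ^ 2 / (8 * t)))) ≤
        S * (B * (∫ v, m (3 + e) v) + 3 * ∫ ξ, ‖ξ‖ ^ e * Ψ ξ) / τ ^ (3 + e) := by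
    intro e S hS hΨe hcos hsin hexp
    have hJ : 0 ≤ ∫ ξ, ‖ξ‖ ^ e * Ψ ξ :=
      integral_nonneg fun ξ => mul_nonneg (by positivity) (hΨ0 ξ)
    have i1 := hGi.const_mul c₀
    have i2 := (hmi (3 + e)).const_mul (B * S * (τ ^ (3 + e))⁻¹)
    have i3 := hΨe.const_mul (3 * exp (-c * t) * S)
    have hmono := (integral_mono ((i1.sub i2).sub i3) hint fun ξ => ?_).trans hle
    · rw [integral_sub' (i1.sub i2) i3, integral_sub' i1 i2, integral_const_mul,
        integral_const_mul, integral_const_mul, hscale, hscale, hGval] at hmono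
      rw [le_div_iff₀ (by positivity)]
      have hP : 0 < τ ^ N := by positivity
      have hQ : 0 < τ ^ (3 + e) := by positivity
      have h5 := mul_le_mul_of_nonneg_left hmono (mul_pos hP hQ).le
      have h6 := mul_le_mul_of_nonneg_right hexp (mul_nonneg hS hJ)
      rw [pow_add τ N] at h6
      have h7 : τ ^ N * τ ^ (3 + e) * (c₀ * ((τ ^ N)⁻¹ *
          (A₀ * (1 - exp (-(‖x‖ ^ 2 / (8 * t)))))) -
          B * S * (τ ^ (3 + e))⁻¹ * ((τ ^ N)⁻¹ * ∫ v, m (3 + e) v) -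
          3 * exp (-c * t) * S * ∫ ξ, ‖ξ‖ ^ e * Ψ ξ) =
          c₀ * A₀ * (1 - exp (-(‖x‖ ^ 2 / (8 * t)))) * τ ^ (3 + e) -
          S * B * (∫ v, m (3 + e) v) -
          3 * (exp (-c * t) * (τ ^ N * τ ^ (3 + e)) * (S * ∫ ξ, ‖ξ‖ ^ e * Ψ ξ)) := by
        field_simp
      rw [h7] at h5
      linarith
    · have := spectral_integrand_ge (hΨ0 ξ) (hre t ht1 ξ) (him t ht1 ξ) (hcos ξ) (hsin ξ)
      refine le_trans (le_of_eq ?_) this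
      have h8 := hm (3 + e) ξ
      simp only [Pi.sub_apply]
      rw [hG, mul_assoc (B * S), ← h8, pow_add]
      ring
  have h3 : 1 - exp (-(‖x‖ ^ 2 / (8 * t))) ≤ A / τ ^ 3 := by
    have h := key 0 1 zero_le_one (by simpa using hΨ)
      (fun ξ => by simpa using by linarith [neg_one_le_cos (2 * π * inner ℝ ξ x)])
      (fun ξ => by simpa using abs_sin_le_one _) hexp3
    simp only [pow_zero, one_mul, add_zero] at h
    exact ((le_div_iff₀' (by positivity)).2 (h.trans (by gcongr))).trans_eq
      (div_right_comm K (τ ^ 3) (c₀ * A₀))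
  have h4 : 1 - exp (-(‖x‖ ^ 2 / (8 * t))) ≤ A * ‖x‖ / τ ^ 4 := by
    have habs : ∀ ξ : V, |2 * π * inner ℝ ξ x| ≤ 2 * π * ‖x‖ * ‖ξ‖ ^ 1 := fun ξ => by
      rw [abs_mul, abs_of_pos two_pi_pos, pow_one, mul_assoc _ ‖x‖, mul_comm ‖x‖]
      exact mul_le_mul_of_nonneg_left (abs_real_inner_le_norm ξ x) two_pi_pos.le
    have h := key 1 (2 * π * ‖x‖) (by positivity) (by simpa using hΨ1)
      (fun ξ => by
        linarith [(one_sub_cos_le_abs (2 * π * inner ℝ ξ x)).trans (habs ξ),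
          (abs_nonneg _).trans (habs ξ)])
      (fun ξ => (abs_sin_le_abs (x := _)).trans (habs ξ)) hexp4
    simp only [pow_one, Nat.reduceAdd] at h
    have h' : c₀ * A₀ * (1 - exp (-(‖x‖ ^ 2 / (8 * t)))) ≤ K * ‖x‖ / τ ^ 4 := by
      refine h.trans (div_le_div_of_nonneg_right ?_ (by positivity))
      rw [mul_right_comm]
      gcongr
    exact ((le_div_iff₀' (by positivity)).2 h').trans_eq (by rw [hA]; ring)
  refine le_sixteen_mul_div_of_one_sub_exp_le hApos (norm_nonneg x) hτ0 hτt ?_ h3 h4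
  calc 2 * A ≤ τ := ((le_max_right _ _).trans (le_max_right _ _)).trans hτ
    _ ≤ τ ^ 3 := le_self_pow₀ hτ1 (by norm_num)

end GaussianMoments

section OscillatorBounds

variable {w v : ℝ → ℂ} {ρ M : ℝ}

theorem damped_oscillator_low_frequency (hw : ContinuousOn w (Ici 0)) (hv : ContinuousOn v (Ici 0))
    (hdw : ∀ t > 0, HasDerivAt w (v t) t) (hdv : ∀ t > 0, HasDerivAt v (-v t - ρ • w t) t)
    (hρ0 : 0 ≤ ρ) (hρ : ρ ≤ 3 / 16) (hM : 0 ≤ M) (hre : M / 2 ≤ (v 0 + w 0).re)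
    (hw0 : 2 * ρ * ‖w 0‖ ≤ M / 4) {t : ℝ} (ht : 0 ≤ t) :
    M / 4 * exp (-(2 * ρ) * t) - 2 * exp (-(1 / 2) * t) * (‖v 0‖ + ‖w 0‖) ≤ (w t).re ∧
    |(w t).im| ≤ 2 * exp (-ρ * t) * (|(v 0 + w 0).im| + 2 * ρ * |(w 0).im|) +
      2 * exp (-(1 / 2) * t) * (‖v 0‖ + ‖w 0‖) := by
  set d := √(1 - 4 * ρ) with hd
  have hdsq : d ^ 2 = 1 - 4 * ρ := sq_sqrt (by linarith)
  have hd0 : 0 ≤ d := sqrt_nonneg _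
  have hd1 : d ≤ 1 := by nlinarith
  have hd2 : 1 / 2 ≤ d := by nlinarith
  set a := (1 - d) / 2 with ha
  set b := (1 + d) / 2 with hb
  have hab : a + b = 1 := by rw [ha, hb]; ring
  have ha1 : ρ ≤ a := by nlinarith
  have ha2 : a ≤ 2 * ρ := by nlinarith
  have hb1 : 1 / 2 ≤ b := by linarith
  have hform := damped_oscillator_formula hw hv hdw hdv hab (by rw [ha, hb]; nlinarith) ht
  rw [show b - a = d by rw [ha, hb]; ring] at hform
  have hsplit : v 0 + b • w 0 = (v 0 + w 0) - a • w 0 := by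
    rw [show b = 1 - a by linarith]; module
  rw [hsplit] at hform
  set q := v 0 + a • w 0
  have hq : ‖q‖ ≤ ‖v 0‖ + ‖w 0‖ := by
    refine (norm_add_le _ _).trans ?_
    rw [norm_smul, norm_of_nonneg (by linarith)]
    nlinarith [norm_nonneg (w 0)]
  set S := ‖v 0‖ + ‖w 0‖
  have hS : 0 ≤ S := by positivity
  have hexpb : exp (-b * t) ≤ exp (-(1 / 2) * t) := by gcongr
  have hR : exp (-b * t) * ‖q‖ ≤ exp (-(1 / 2) * t) * S := by gcongr
  have hR0 : 0 ≤ exp (-(1 / 2) * t) * S := by positivity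
  have hinv : ∀ X : ℝ, 0 ≤ X → X / d ≤ 2 * X := fun X hX => by
    rw [div_le_iff₀ (by linarith)]; nlinarith
  constructor
  · have h := congrArg Complex.re hform
    simp only [Complex.smul_re, Complex.sub_re, smul_eq_mul] at h
    have h1 : M / 4 ≤ (v 0 + w 0).re - a * (w 0).re := by
      have h2 : a * (w 0).re ≤ 2 * ρ * ‖w 0‖ :=
        (mul_le_mul_of_nonneg_left (Complex.re_le_norm _) (by linarith)).trans (by gcongr)
      linarith
    have h2 : M / 4 * exp (-(2 * ρ) * t) ≤ exp (-a * t) * ((v 0 + w 0).re - a * (w 0).re) := by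
      rw [mul_comm]
      gcongr
    have h3 : exp (-b * t) * q.re ≤ exp (-(1 / 2) * t) * S :=
      (mul_le_mul_of_nonneg_left (Complex.re_le_norm _) (exp_pos _).le).trans hR
    have h4 : 0 ≤ M / 4 * exp (-(2 * ρ) * t) := by positivity
    nlinarith
  · have h := congrArg Complex.im hform
    simp only [Complex.smul_im, Complex.sub_im, smul_eq_mul] at h
    have h1 : |d * (w t).im| ≤ exp (-ρ * t) * (|(v 0 + w 0).im| + 2 * ρ * |(w 0).im|) +
        exp (-(1 / 2) * t) * S := by
      rw [h]
      refine (abs_sub _ _).trans (add_le_add ?_ ?_)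
      · rw [abs_mul, abs_of_pos (exp_pos _)]
        gcongr
        refine (abs_sub _ _).trans ?_
        rw [abs_mul, abs_of_nonneg (by linarith : 0 ≤ a)]
        gcongr
      · rw [abs_mul, abs_of_pos (exp_pos _)]
        exact (mul_le_mul_of_nonneg_left (Complex.abs_im_le_norm _) (exp_pos _).le).trans hR
    rw [abs_mul, abs_of_nonneg hd0] at h1
    have h2 : 0 ≤ |(w t).im| := abs_nonneg _
    nlinarith

theorem damped_oscillator_bounds (hw : ContinuousOn w (Ici 0)) (hv : ContinuousOn v (Ici 0))
    (hdw : ∀ t > 0, HasDerivAt w (v t) t) (hdv : ∀ t > 0, HasDerivAt v (-v t - ρ • w t) t)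
    (hρ0 : 0 ≤ ρ) (hM : 0 ≤ M) {θ : ℝ} (hθ0 : 0 < θ) (hθ : θ ≤ 3 / 16)
    (hre : ρ ≤ θ → M / 2 ≤ (v 0 + w 0).re) (hw0 : ρ ≤ θ → 2 * ρ * ‖w 0‖ ≤ M / 4)
    {t : ℝ} (ht : 1 ≤ t) :
    M / 4 * exp (-(2 * ρ) * t) - exp (-(θ / 4) * t) *
      ((4 + 4 / θ + M) * (‖v 0‖ + (1 + ρ) * ‖w 0‖ + exp (-ρ))) ≤ (w t).re ∧
    |(w t).im| ≤ 2 * exp (-ρ * t) * (|(v 0 + w 0).im| + 2 * ρ * |(w 0).im|) +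
      exp (-(θ / 4) * t) * ((4 + 4 / θ + M) * (‖v 0‖ + (1 + ρ) * ‖w 0‖ + exp (-ρ))) := by
  have ht0 : 0 ≤ t := by linarith
  have hK : 0 < 4 / θ := by positivity
  have hv0 := norm_nonneg (v 0)
  have hwn := norm_nonneg (w 0)
  have he := exp_pos (-(θ / 4) * t)
  have heρ := exp_pos (-ρ)
  rcases le_total ρ θ with h | h
  · obtain ⟨h1, h2⟩ := damped_oscillator_low_frequency hw hv hdw hdv hρ0 (h.trans hθ) hM (hre h)
      (hw0 h) ht0
    have h3 : 2 * exp (-(1 / 2) * t) * (‖v 0‖ + ‖w 0‖) ≤ exp (-(θ / 4) * t) *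
        ((4 + 4 / θ + M) * (‖v 0‖ + (1 + ρ) * ‖w 0‖ + exp (-ρ))) := by
      have h4 : exp (-(1 / 2) * t) ≤ exp (-(θ / 4) * t) := by gcongr <;> linarith
      calc 2 * exp (-(1 / 2) * t) * (‖v 0‖ + ‖w 0‖)
          ≤ 2 * exp (-(θ / 4) * t) * (‖v 0‖ + ‖w 0‖) := by gcongr
        _ = exp (-(θ / 4) * t) * (2 * (‖v 0‖ + 1 * ‖w 0‖ + 0)) := by ring
        _ ≤ _ := by gcongr <;> linarith
    exact ⟨by linarith, by linarith⟩
  · have h1 := damped_oscillator_decay hw hv hdw hdv hθ0 (by linarith) h ht0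
    have h2 : 2 / θ * exp (-(θ / 4) * t) * (2 * ‖v 0‖ + (1 + ρ) * ‖w 0‖) ≤
        exp (-(θ / 4) * t) * (4 / θ * (‖v 0‖ + (1 + ρ) * ‖w 0‖)) := by
      have : 0 ≤ exp (-(θ / 4) * t) * (2 / θ * ((1 + ρ) * ‖w 0‖)) := by positivity
      calc _ = exp (-(θ / 4) * t) * (4 / θ * (‖v 0‖ + (1 + ρ) * ‖w 0‖)) -
            exp (-(θ / 4) * t) * (2 / θ * ((1 + ρ) * ‖w 0‖)) := by ring
        _ ≤ _ := by linarith
    have h3 : M / 4 * exp (-(2 * ρ) * t) ≤ exp (-(θ / 4) * t) * (M * exp (-ρ)) := by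
      have h4 : exp (-(2 * ρ) * t) ≤ exp (-(θ / 4) * t) * exp (-ρ) := by
        rw [← exp_add]
        gcongr
        nlinarith
      have h5 : 0 ≤ exp (-(θ / 4) * t) * exp (-ρ) := by positivity
      nlinarith
    have h4 : exp (-(θ / 4) * t) * (4 / θ * (‖v 0‖ + (1 + ρ) * ‖w 0‖)) +
        exp (-(θ / 4) * t) * (M * exp (-ρ)) ≤ exp (-(θ / 4) * t) *
        ((4 + 4 / θ + M) * (‖v 0‖ + (1 + ρ) * ‖w 0‖ + exp (-ρ))) := by
      rw [← mul_add]
      gcongr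
      have h5 : 0 ≤ (4 + M) * (‖v 0‖ + (1 + ρ) * ‖w 0‖) + (4 + 4 / θ) * exp (-ρ) := by positivity
      linarith
    have h5 := Complex.abs_re_le_norm (w t)
    have h6 := Complex.abs_im_le_norm (w t)
    have h7 := neg_le_of_abs_le h5
    have h8 : 0 ≤ 2 * exp (-ρ * t) * (|(v 0 + w 0).im| + 2 * ρ * |(w 0).im|) := by positivity
    have h9 : 0 ≤ exp (-(θ / 4) * t) * (M * exp (-ρ)) := by positivity
    exact ⟨by linarith, by linarith⟩

end OscillatorBounds

section FourierMoments

open scoped FourierTransform ContDiff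

variable {V : Type*} [NormedAddCommGroup V] [InnerProductSpace ℝ V] [FiniteDimensional ℝ V]
  [MeasurableSpace V] [BorelSpace V] {a : V → ℝ}

theorem integrable_mul_of_hasCompactSupport (ha : Continuous a) (hc : HasCompactSupport a)
    {ψ : V → ℝ} (hψ : Continuous ψ) : Integrable fun x => a x * ψ x :=
  (ha.mul hψ).integrable_of_hasCompactSupport hc.mul_right

theorem integrable_fourierChar_mul (ha : Integrable a) (ξ : V) :
    Integrable fun x => Complex.exp (((-2 * π * inner ℝ x ξ : ℝ) : ℂ) * Complex.I) * (a x : ℂ) := by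
  have hi : Integrable fun x => (a x : ℂ) := ha.ofReal
  refine hi.mono ((Continuous.aestronglyMeasurable (by fun_prop)).mul
    hi.aestronglyMeasurable) (Eventually.of_forall fun x => ?_)
  rw [norm_mul, Complex.norm_exp_ofReal_mul_I, one_mul]

theorem re_fourier_ofReal (ha : Integrable a) (ξ : V) :
    (𝓕 (fun x => (a x : ℂ)) ξ).re = ∫ x, a x * cos (2 * π * inner ℝ x ξ) := by
  rw [Real.fourier_eq']
  simp only [smul_eq_mul]
  rw [← RCLike.re_eq_complex_re, ← integral_re (integrable_fourierChar_mul ha ξ)]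
  refine integral_congr_ae (Eventually.of_forall fun x => ?_)
  simp only [RCLike.re_eq_complex_re, Complex.re_mul_ofReal, Complex.exp_ofReal_mul_I_re]
  rw [show -2 * π * inner ℝ x ξ = -(2 * π * inner ℝ x ξ) by ring, cos_neg, mul_comm]

theorem im_fourier_ofReal (ha : Integrable a) (ξ : V) :
    (𝓕 (fun x => (a x : ℂ)) ξ).im = -∫ x, a x * sin (2 * π * inner ℝ x ξ) := by
  rw [Real.fourier_eq', ← integral_neg]
  simp only [smul_eq_mul]
  rw [← RCLike.im_eq_complex_im, ← integral_im (integrable_fourierChar_mul ha ξ)]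
  refine integral_congr_ae (Eventually.of_forall fun x => ?_)
  simp only [RCLike.im_eq_complex_im, Complex.im_mul_ofReal, Complex.exp_ofReal_mul_I_im]
  rw [show -2 * π * inner ℝ x ξ = -(2 * π * inner ℝ x ξ) by ring, sin_neg]
  ring

theorem norm_fourier_ofReal_le (ξ : V) : ‖𝓕 (fun x => (a x : ℂ)) ξ‖ ≤ ∫ x, |a x| := by
  rw [Real.fourier_eq']
  refine (norm_integral_le_integral_norm _).trans (le_of_eq ?_)
  congr 1 with x
  rw [norm_smul, Complex.norm_exp_ofReal_mul_I, one_mul, Complex.norm_real, norm_eq_abs]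

theorem abs_two_pi_mul_inner_le {E : Type*} [NormedAddCommGroup E] [InnerProductSpace ℝ E]
    (x ξ : E) : |2 * π * inner ℝ x ξ| ≤ 2 * π * ‖ξ‖ * ‖x‖ := by
  rw [abs_mul, abs_of_pos two_pi_pos, mul_assoc _ ‖ξ‖, mul_comm ‖ξ‖]
  exact mul_le_mul_of_nonneg_left (abs_real_inner_le_norm x ξ) two_pi_pos.le

theorem abs_im_fourier_ofReal_le (ha : Continuous a) (hc : HasCompactSupport a) (ξ : V) :
    |(𝓕 (fun x => (a x : ℂ)) ξ).im| ≤ 2 * π * ‖ξ‖ * ∫ x, |a x| * ‖x‖ := by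
  rw [im_fourier_ofReal (ha.integrable_of_hasCompactSupport hc), abs_neg, ← integral_const_mul]
  refine abs_integral_le_integral_abs.trans (integral_mono
    (integrable_mul_of_hasCompactSupport ha hc (by fun_prop)).abs
    ((integrable_mul_of_hasCompactSupport ha.abs hc.abs continuous_norm).const_mul _) fun x => ?_)
  simp only [abs_mul]
  calc |a x| * |sin (2 * π * inner ℝ x ξ)| ≤ |a x| * (2 * π * ‖ξ‖ * ‖x‖) := by
        gcongr
        exact abs_sin_le_abs.trans (abs_two_pi_mul_inner_le x ξ)
    _ = _ := by ring

theorem abs_im_fourier_ofReal_le_cube (ha : Continuous a) (hc : HasCompactSupport a)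
    (h0 : ∫ x, a x • x = 0) (ξ : V) :
    |(𝓕 (fun x => (a x : ℂ)) ξ).im| ≤ (2 * π * ‖ξ‖) ^ 3 * ∫ x, |a x| * ‖x‖ ^ 3 := by
  have h1 : ∫ x, a x * (2 * π * inner ℝ x ξ) = 0 := by
    have hi : Integrable fun x => a x • x :=
      (ha.smul continuous_id).integrable_of_hasCompactSupport hc.smul_right
    have h2 := integral_inner (𝕜 := ℝ) hi ξ
    rw [h0, inner_zero_right] at h2
    calc ∫ x, a x * (2 * π * inner ℝ x ξ) = ∫ x, 2 * π * inner ℝ ξ (a x • x) := by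
          congr 1 with x
          rw [real_inner_smul_right, real_inner_comm]; ring
      _ = 0 := by rw [integral_const_mul, h2, mul_zero]
  rw [im_fourier_ofReal (ha.integrable_of_hasCompactSupport hc), ← sub_eq_neg_self.2 rfl,
    ← h1, ← integral_sub (integrable_mul_of_hasCompactSupport ha hc (by fun_prop))
      (integrable_mul_of_hasCompactSupport ha hc (by fun_prop)), ← integral_const_mul]
  refine abs_integral_le_integral_abs.trans (integral_mono
    ((integrable_mul_of_hasCompactSupport ha hc (by fun_prop)).sub
      (integrable_mul_of_hasCompactSupport ha hc (by fun_prop))).abs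
    ((integrable_mul_of_hasCompactSupport ha.abs hc.abs (continuous_norm.pow 3)).const_mul _)
    fun x => ?_)
  dsimp only
  rw [← mul_sub, abs_mul]
  calc |a x| * |2 * π * inner ℝ x ξ - sin (2 * π * inner ℝ x ξ)|
      ≤ |a x| * (2 * π * ‖ξ‖ * ‖x‖) ^ 3 := by
        gcongr
        refine (abs_sub_sin_le _).trans ?_
        have := pow_le_pow_left₀ (abs_nonneg _) (abs_two_pi_mul_inner_le x ξ) 3
        have h3 : 0 ≤ |2 * π * inner ℝ x ξ| ^ 3 := by positivity
        linarith
    _ = _ := by ring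

theorem re_fourier_ofReal_ge (ha : Continuous a) (hc : HasCompactSupport a) (h0 : ∀ x, 0 ≤ a x)
    (ξ : V) : (∫ x, a x) - 2 * π ^ 2 * ‖ξ‖ ^ 2 * (∫ x, a x * ‖x‖ ^ 2) ≤
      (𝓕 (fun x => (a x : ℂ)) ξ).re := by
  have hi := ha.integrable_of_hasCompactSupport hc (μ := volume)
  have h2 : Integrable fun x => 2 * π ^ 2 * ‖ξ‖ ^ 2 * (a x * ‖x‖ ^ 2) :=
    (integrable_mul_of_hasCompactSupport ha hc (by fun_prop)).const_mul _
  rw [re_fourier_ofReal hi, ← integral_const_mul, ← integral_sub hi h2]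
  refine integral_mono (hi.sub h2)
    (integrable_mul_of_hasCompactSupport ha hc (by fun_prop)) fun x => ?_
  dsimp only
  have h3 := one_sub_sq_div_two_le_cos (x := 2 * π * inner ℝ x ξ)
  have h4 := sq_le_sq.2 ((abs_two_pi_mul_inner_le x ξ).trans (le_abs_self _))
  calc a x - 2 * π ^ 2 * ‖ξ‖ ^ 2 * (a x * ‖x‖ ^ 2)
      = a x * (1 - (2 * π * ‖ξ‖ * ‖x‖) ^ 2 / 2) := by ring
    _ ≤ _ := mul_le_mul_of_nonneg_left (by linarith) (h0 x)

theorem integrable_pow_mul_norm_fourier (ha : ContDiff ℝ ∞ a) (hc : HasCompactSupport a) (j : ℕ) :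
    Integrable fun ξ => ‖ξ‖ ^ j * ‖𝓕 (fun x => (a x : ℂ)) ξ‖ := by
  have hc' : HasCompactSupport fun x => (a x : ℂ) := hc.comp_left Complex.ofReal_zero
  have ha' : ContDiff ℝ ∞ fun x => (a x : ℂ) := Complex.ofRealCLM.contDiff.comp ha
  exact SchwartzMap.integrable_pow_mul volume (𝓕 (hc'.toSchwartzMap ha')) j

theorem fourier_inversion_sub (ha : Continuous a) (hi : Integrable a)
    (hF : Integrable (𝓕 (fun x => (a x : ℂ)))) (x : V) :
    Integrable (fun ξ => (1 - cos (2 * π * inner ℝ ξ x)) * (𝓕 (fun x => (a x : ℂ)) ξ).re +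
      sin (2 * π * inner ℝ ξ x) * (𝓕 (fun x => (a x : ℂ)) ξ).im) ∧
    ∫ ξ, ((1 - cos (2 * π * inner ℝ ξ x)) * (𝓕 (fun x => (a x : ℂ)) ξ).re +
      sin (2 * π * inner ℝ ξ x) * (𝓕 (fun x => (a x : ℂ)) ξ).im) = a 0 - a x := by
  set F := 𝓕 (fun x => (a x : ℂ)) with hFdef
  have hinv := (Complex.continuous_ofReal.comp ha).fourierInv_fourier_eq hi.ofReal hF
  have hval : ∀ y, (a y : ℂ) = ∫ ξ, Complex.exp (((2 * π * inner ℝ ξ y : ℝ) : ℂ) * Complex.I) * F ξ :=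
    fun y => by
    have := congrFun hinv y
    rw [Real.fourierInv_eq'] at this
    exact this.symm
  have hint : ∀ y, Integrable fun ξ =>
      Complex.exp (((2 * π * inner ℝ ξ y : ℝ) : ℂ) * Complex.I) * F ξ := fun y => by
    refine hF.mono ((Continuous.aestronglyMeasurable (by fun_prop)).mul
      hF.aestronglyMeasurable) (Eventually.of_forall fun ξ => ?_)
    rw [norm_mul, Complex.norm_exp_ofReal_mul_I, one_mul]
  have hre : ∀ y, Integrable (fun ξ => cos (2 * π * inner ℝ ξ y) * (F ξ).re -
      sin (2 * π * inner ℝ ξ y) * (F ξ).im) ∧ ∫ ξ, (cos (2 * π * inner ℝ ξ y) * (F ξ).re -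
      sin (2 * π * inner ℝ ξ y) * (F ξ).im) = a y := fun y => by
    have h1 := integral_re (hint y)
    rw [← hval] at h1
    have h2 := (hint y).re
    simp only [RCLike.re_eq_complex_re, Complex.mul_re, Complex.exp_ofReal_mul_I_re,
      Complex.exp_ofReal_mul_I_im, Complex.ofReal_re] at h1 h2
    exact ⟨h2, h1⟩
  obtain ⟨hx1, hx2⟩ := hre x
  obtain ⟨h01, h02⟩ := hre 0
  have heq : ∀ ξ, (1 - cos (2 * π * inner ℝ ξ x)) * (F ξ).re + sin (2 * π * inner ℝ ξ x) * (F ξ).im =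
      (cos (2 * π * inner ℝ ξ (0 : V)) * (F ξ).re - sin (2 * π * inner ℝ ξ (0 : V)) * (F ξ).im) -
      (cos (2 * π * inner ℝ ξ x) * (F ξ).re - sin (2 * π * inner ℝ ξ x) * (F ξ).im) := fun ξ => by
    simp only [inner_zero_right, mul_zero, cos_zero, sin_zero]
    ring
  simp only [heq]
  exact ⟨h01.sub hx1, by rw [integral_sub h01 hx1, h02, hx2]⟩

theorem continuous_fourier_ofReal (ha : Integrable a) :
    Continuous (𝓕 (fun x => (a x : ℂ))) :=
  VectorFourier.fourierIntegral_continuous Real.continuous_fourierChar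
    (innerSL ℝ).continuous₂ ha.ofReal

end FourierMoments

section WaveModes

open scoped FourierTransform ContDiff

theorem modeCoeff_eq_fourier (ξ : EuclideanSpace ℝ (Fin n))
    (H : EuclideanSpace ℝ (Fin n) × ℝ → ℝ) (t : ℝ) :
    modeCoeff ξ H t = 𝓕 (fun x => (H (x, t) : ℂ)) ξ := by
  rw [Real.fourier_eq']
  rfl

theorem fourier_ofReal_add {V : Type*} [NormedAddCommGroup V] [InnerProductSpace ℝ V]
    [FiniteDimensional ℝ V] [MeasurableSpace V] [BorelSpace V] {f g : V → ℝ} (hf : Integrable f)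
    (hg : Integrable g) (ξ : V) :
    𝓕 (fun x => ((f x + g x : ℝ) : ℂ)) ξ = 𝓕 (fun x => (f x : ℂ)) ξ + 𝓕 (fun x => (g x : ℂ)) ξ := by
  simp only [Real.fourier_eq', smul_eq_mul, Complex.ofReal_add, mul_add]
  exact integral_add (integrable_fourierChar_mul hf ξ) (integrable_fourierChar_mul hg ξ)

variable {U : EuclideanSpace ℝ (Fin n) × ℝ → ℝ} {R : ℝ}

theorem modeCoeff_oscillator (hU : IsDampedWave U) (h0 : ∀ x, R < ‖x‖ → U (x, 0) = 0)
    (h1 : ∀ x, R < ‖x‖ → ∀ w, stDeriv U w (x, 0) = 0) (ξ : EuclideanSpace ℝ (Fin n)) :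
    ContinuousOn (modeCoeff ξ U) (Ici 0) ∧ ContinuousOn (modeCoeff ξ (stDeriv U (0, 1))) (Ici 0) ∧
    (∀ t > 0, HasDerivAt (modeCoeff ξ U) (modeCoeff ξ (stDeriv U (0, 1)) t) t) ∧
    ∀ t > 0, HasDerivAt (modeCoeff ξ (stDeriv U (0, 1)))
      (-modeCoeff ξ (stDeriv U (0, 1)) t - (4 * π ^ 2 * ‖ξ‖ ^ 2) • modeCoeff ξ U t) t := by
  refine ⟨continuousOn_modeCoeff (ρ := R + 2) (hU.contDiffOn.of_le (by norm_num))
      (fun T x t ht hx => (slab_support hU h0 h1 T x ht hx).1) ξ,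
    continuousOn_modeCoeff (ρ := R + 2) (contDiffOn_stDeriv hU.contDiffOn _)
      (fun T x t ht hx => (slab_support hU h0 h1 T x ht hx).2.1) ξ,
    fun t ht => (hasDerivAt_modeCoeff_wave hU h0 h1 ξ ht).1, fun t ht => ?_⟩
  rw [Complex.real_smul]
  exact (hasDerivAt_modeCoeff_wave hU h0 h1 ξ ht).2

theorem continuous_wave_slice (hU : IsDampedWave U) {t : ℝ} (ht : 0 < t) :
    Continuous fun x => U (x, t) :=
  (contDiff_slice (contDiffOn_one_pos hU.contDiffOn) ht).continuous

theorem integrable_wave_slice (hU : IsDampedWave U) (h0 : ∀ x, R < ‖x‖ → U (x, 0) = 0)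
    (h1 : ∀ x, R < ‖x‖ → ∀ w, stDeriv U w (x, 0) = 0) {t : ℝ} (ht : 0 < t) :
    Integrable fun x => U (x, t) :=
  (continuous_wave_slice hU ht).integrable_of_hasCompactSupport
    (hasCompactSupport_slice (T := t)
      (fun x _ hs hx => (slab_support hU h0 h1 t x hs hx).1) ⟨ht.le, le_rfl⟩)

variable {f g : EuclideanSpace ℝ (Fin n) → ℝ}

theorem modeCoeff_zero (hUf : ∀ x, U (x, 0) = f x) (ξ : EuclideanSpace ℝ (Fin n)) :
    modeCoeff ξ U 0 = 𝓕 (fun x => (f x : ℂ)) ξ := by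
  simp only [modeCoeff_eq_fourier, hUf]

theorem integrable_polynomial_mul_fourier (hf : ContDiff ℝ ∞ f) (hfc : HasCompactSupport f)
    (hg : ContDiff ℝ ∞ g) (hgc : HasCompactSupport g) (a b c d : ℝ) (j : ℕ) :
    Integrable fun ξ : EuclideanSpace ℝ (Fin n) => ‖ξ‖ ^ j * (a * (b * ‖𝓕 (fun x => (g x : ℂ)) ξ‖ +
      (1 + 4 * π ^ 2 * ‖ξ‖ ^ 2) * ‖𝓕 (fun x => (f x : ℂ)) ξ‖ +
      c * exp (-(4 * π ^ 2 * ‖ξ‖ ^ 2)) + d * exp (-(4 * π ^ 2 * ‖ξ‖ ^ 2)))) := by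
  have h1 := ((integrable_pow_mul_norm_fourier hg hgc j).const_mul (a * b))
  have h2 := ((integrable_pow_mul_norm_fourier hf hfc j).const_mul a)
  have h3 := ((integrable_pow_mul_norm_fourier hf hfc (j + 2)).const_mul (a * (4 * π ^ 2)))
  have h4 := (integrable_norm_pow_mul_exp_neg_mul_sq_norm (V := EuclideanSpace ℝ (Fin n))
    (b := 4 * π ^ 2) (by positivity) j).const_mul (a * (c + d))
  refine (((h1.add h2).add h3).add h4).congr (Eventually.of_forall fun ξ => ?_)
  simp only [Pi.add_apply]
  rw [neg_mul]
  ring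

theorem integrable_fourier_wave_slice (hU : IsDampedWave U) (h0 : ∀ x, R < ‖x‖ → U (x, 0) = 0)
    (h1 : ∀ x, R < ‖x‖ → ∀ w, stDeriv U w (x, 0) = 0) (hf : ContDiff ℝ ∞ f)
    (hfc : HasCompactSupport f) (hg : ContDiff ℝ ∞ g) (hgc : HasCompactSupport g)
    (hUf : ∀ x, U (x, 0) = f x) (hUg : ∀ x, stDeriv U (0, 1) (x, 0) = g x) {t : ℝ} (ht : 0 < t) :
    Integrable (𝓕 (fun x => (U (x, t) : ℂ))) := by
  have hi := integrable_wave_slice hU h0 h1 ht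
  have hdom := integrable_polynomial_mul_fourier hf hfc hg hgc 16 2
    ((∫ x, |U (x, t)|) * exp 1) 0 0
  refine hdom.mono' (continuous_fourier_ofReal hi).aestronglyMeasurable
    (Eventually.of_forall fun ξ => ?_)
  have hI : 0 ≤ ∫ x, |U (x, t)| := integral_nonneg fun x => abs_nonneg _
  have hg0 := norm_nonneg (𝓕 (fun x => (g x : ℂ)) ξ)
  have hf0 : 0 ≤ (1 + 4 * π ^ 2 * ‖ξ‖ ^ 2) * ‖𝓕 (fun x => (f x : ℂ)) ξ‖ := by positivity
  have he : 0 ≤ (∫ x, |U (x, t)|) * exp 1 * exp (-(4 * π ^ 2 * ‖ξ‖ ^ 2)) := by positivity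
  rw [pow_zero, one_mul, zero_mul, add_zero]
  rcases le_total (1 / 8) (4 * π ^ 2 * ‖ξ‖ ^ 2) with h | h
  · obtain ⟨hw, hv, hdw, hdv⟩ := modeCoeff_oscillator hU h0 h1 ξ
    have hd := damped_oscillator_decay hw hv hdw hdv (by norm_num) (by norm_num) h ht.le
    rw [modeCoeff_zero hUf, modeCoeff_zero hUg, modeCoeff_eq_fourier] at hd
    have h1 : exp (-(1 / 8 / 4) * t) ≤ 1 := exp_le_one_iff.2 (by linarith)
    refine hd.trans ?_
    calc _ ≤ 2 / (1 / 8) * 1 * (2 * ‖𝓕 (fun x => (g x : ℂ)) ξ‖ +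
          (1 + 4 * π ^ 2 * ‖ξ‖ ^ 2) * ‖𝓕 (fun x => (f x : ℂ)) ξ‖) := by gcongr
      _ ≤ _ := by linarith
  · have h2 : 1 ≤ exp 1 * exp (-(4 * π ^ 2 * ‖ξ‖ ^ 2)) := by
      rw [← exp_add]
      exact one_le_exp (by linarith)
    have h3 := mul_le_mul_of_nonneg_left h2 hI
    have h4 := norm_fourier_ofReal_le (a := fun x => U (x, t)) ξ
    linarith

theorem exists_modeCoeff_bounds (hU : IsDampedWave U) (h0 : ∀ x, R < ‖x‖ → U (x, 0) = 0)
    (h1 : ∀ x, R < ‖x‖ → ∀ w, stDeriv U w (x, 0) = 0) (hf : Continuous f)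
    (hfc : HasCompactSupport f) (hg : Continuous g) (hgc : HasCompactSupport g)
    (hUf : ∀ x, U (x, 0) = f x) (hUg : ∀ x, stDeriv U (0, 1) (x, 0) = g x)
    (hpos : ∀ x, 0 ≤ f x + g x) (hM : 0 < ∫ x, (f x + g x)) (hcen : ∫ x, (f x + g x) • x = 0) :
    ∃ c₀ > 0, ∃ B ≥ 0, ∃ c > 0, ∃ K ≥ 0, ∀ t ≥ 1, ∀ ξ,
      c₀ * exp (-(8 * π ^ 2 * ‖ξ‖ ^ 2) * t) - exp (-c * t) *
        (K * (‖𝓕 (fun x => (g x : ℂ)) ξ‖ + (1 + 4 * π ^ 2 * ‖ξ‖ ^ 2) *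
          ‖𝓕 (fun x => (f x : ℂ)) ξ‖ + exp (-(4 * π ^ 2 * ‖ξ‖ ^ 2)))) ≤
        (𝓕 (fun x => (U (x, t) : ℂ)) ξ).re ∧
      |(𝓕 (fun x => (U (x, t) : ℂ)) ξ).im| ≤
        B * ‖ξ‖ ^ 3 * exp (-(4 * π ^ 2 * ‖ξ‖ ^ 2) * t) + exp (-c * t) *
        (K * (‖𝓕 (fun x => (g x : ℂ)) ξ‖ + (1 + 4 * π ^ 2 * ‖ξ‖ ^ 2) *
          ‖𝓕 (fun x => (f x : ℂ)) ξ‖ + exp (-(4 * π ^ 2 * ‖ξ‖ ^ 2)))) := by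
  set M := ∫ x, (f x + g x) with hMdef
  have hs : Continuous fun x => f x + g x := hf.add hg
  have hsc : HasCompactSupport fun x => f x + g x := hfc.add hgc
  set m₂ := ∫ x, (f x + g x) * ‖x‖ ^ 2 with hm₂
  have hm₂0 : 0 ≤ m₂ := integral_nonneg fun x => mul_nonneg (hpos x) (by positivity)
  set L := ∫ x, |f x| with hL
  have hL0 : 0 ≤ L := integral_nonneg fun x => abs_nonneg _
  set m₁ := ∫ x, |f x| * ‖x‖ with hm₁
  have hm₁0 : 0 ≤ m₁ := integral_nonneg fun x => by positivity
  set m₃ := ∫ x, |f x + g x| * ‖x‖ ^ 3 with hm₃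
  have hm₃0 : 0 ≤ m₃ := integral_nonneg fun x => by positivity
  set θ := min (3 / 16) (min (M / (m₂ + 1)) (M / (8 * (L + 1)))) with hθ
  have hθ0 : 0 < θ := by positivity
  have hθ1 : θ ≤ 3 / 16 := min_le_left _ _
  have hθ2 : θ * m₂ ≤ M := by
    have h : θ ≤ M / (m₂ + 1) := (min_le_right _ _).trans (min_le_left _ _)
    rw [le_div_iff₀ (by positivity)] at h
    linarith
  have hθ3 : 8 * (θ * L) ≤ M := by
    have h : θ ≤ M / (8 * (L + 1)) := (min_le_right _ _).trans (min_le_right _ _)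
    rw [le_div_iff₀ (by positivity)] at h
    linarith
  refine ⟨M / 4, by positivity, 2 * (2 * π) ^ 3 * (m₃ + 2 * m₁), by positivity, θ / 4,
    by positivity, 4 + 4 / θ + M, by positivity, fun t ht ξ => ?_⟩
  obtain ⟨hw, hv, hdw, hdv⟩ := modeCoeff_oscillator hU h0 h1 ξ
  have hsum : modeCoeff ξ (stDeriv U (0, 1)) 0 + modeCoeff ξ U 0 =
      𝓕 (fun x => ((f x + g x : ℝ) : ℂ)) ξ := by
    rw [modeCoeff_zero hUf, modeCoeff_zero hUg, fourier_ofReal_add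
      (hf.integrable_of_hasCompactSupport hfc) (hg.integrable_of_hasCompactSupport hgc), add_comm]
  have hρ0 : 0 ≤ 4 * π ^ 2 * ‖ξ‖ ^ 2 := by positivity
  have hb := damped_oscillator_bounds hw hv hdw hdv hρ0 hM.le hθ0 hθ1
    (fun hρ => by
      rw [hsum]
      have h2 := re_fourier_ofReal_ge hs hsc hpos ξ
      have h3 := mul_le_mul_of_nonneg_right hρ hm₂0
      rw [← hm₂, ← hMdef] at h2
      linarith)
    (fun hρ => by
      rw [modeCoeff_zero hUf]
      have h2 := norm_fourier_ofReal_le (a := f) ξ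
      have h3 := mul_le_mul hρ h2 (norm_nonneg _) hθ0.le
      linarith) ht
  rw [hsum, modeCoeff_zero hUf, modeCoeff_zero hUg, modeCoeff_eq_fourier,
    show 2 * (4 * π ^ 2 * ‖ξ‖ ^ 2) = 8 * π ^ 2 * ‖ξ‖ ^ 2 by ring] at hb
  refine ⟨hb.1, hb.2.trans (add_le_add_left ?_ _)⟩
  have h2 := abs_im_fourier_ofReal_le_cube hs hsc hcen ξ
  have h3 := mul_le_mul_of_nonneg_left (abs_im_fourier_ofReal_le hf hfc ξ)
    (show 0 ≤ 8 * π ^ 2 * ‖ξ‖ ^ 2 by positivity)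
  calc _ ≤ 2 * exp (-(4 * π ^ 2 * ‖ξ‖ ^ 2) * t) *
        ((2 * π * ‖ξ‖) ^ 3 * m₃ + 8 * π ^ 2 * ‖ξ‖ ^ 2 * (2 * π * ‖ξ‖ * m₁)) := by gcongr
    _ = _ := by ring

theorem norm_le_div_of_isMaxOn_wave (hU : IsDampedWave U) (h0 : ∀ x, R < ‖x‖ → U (x, 0) = 0)
    (h1 : ∀ x, R < ‖x‖ → ∀ w, stDeriv U w (x, 0) = 0) (hf : ContDiff ℝ ∞ f)
    (hfc : HasCompactSupport f) (hg : ContDiff ℝ ∞ g) (hgc : HasCompactSupport g)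
    (hUf : ∀ x, U (x, 0) = f x) (hUg : ∀ x, stDeriv U (0, 1) (x, 0) = g x)
    (hpos : ∀ x, 0 ≤ f x + g x) (hM : 0 < ∫ x, (f x + g x)) (hcen : ∫ x, (f x + g x) • x = 0) :
    ∃ C > 0, ∃ T > 0, ∀ t ≥ T, ∀ x, (∀ ξ, U (ξ, t) ≤ U (x, t)) → ‖x‖ ≤ C / t := by
  obtain ⟨c₀, hc₀, B, hB, c, hc, K, hK, hb⟩ := exists_modeCoeff_bounds hU h0 h1 hf.continuous hfc
    hg.continuous hgc hUf hUg hpos hM hcen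
  have hΨ := fun j => integrable_polynomial_mul_fourier hf hfc hg hgc K 1 1 0 j
  simp only [one_mul, zero_mul, add_zero] at hΨ
  obtain ⟨C, hC, T, hT, h⟩ := norm_le_div_of_spectral_bounds
    (W := fun t ξ => 𝓕 (fun x => (U (x, t) : ℂ)) ξ) hc₀ hB hc
    (by simpa only [pow_zero, one_mul] using hΨ 0) (by simpa only [pow_one] using hΨ 1)
    (fun ξ => by positivity) (fun t ht ξ => (hb t ht ξ).1) (fun t ht ξ => (hb t ht ξ).2)
  refine ⟨C, hC, T, by linarith, fun t ht x hx => ?_⟩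
  have ht0 : 0 < t := by linarith
  obtain ⟨hi, he⟩ := fourier_inversion_sub (continuous_wave_slice hU ht0)
    (integrable_wave_slice hU h0 h1 ht0)
    (integrable_fourier_wave_slice hU h0 h1 hf hfc hg hgc hUf hUg ht0) x
  exact h t ht x hi (he.trans_le (sub_nonpos.2 (hx 0)))

end WaveModes

section CauchyProblem

open scoped ContDiff

theorem isDampedWave_of_pde {U : EuclideanSpace ℝ (Fin n) × ℝ → ℝ}
    (hU : ContDiffOn ℝ 2 U (univ ×ˢ Ici 0))
    (hpde : ∀ x, ∀ t > (0 : ℝ), deriv (deriv (fun s => U (x, s))) t - lap (fun z => U (z, t)) x +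
      deriv (fun s => U (x, s)) t = 0) : IsDampedWave U where
  contDiffOn := hU
  eqn x t ht := by
    rw [← deriv_deriv_eq_stDeriv hU x ht, ← lap_eq_sum_stDeriv hU x ht,
      ← (hasDerivAt_time_stDeriv hU x ht).deriv]
    exact hpde x t ht

theorem stDeriv_zero_eq {U : EuclideanSpace ℝ (Fin n) × ℝ → ℝ}
    {f g : EuclideanSpace ℝ (Fin n) → ℝ} (hU : ContDiffOn ℝ 2 U (univ ×ˢ Ici 0))
    (hUf : ∀ x, U (x, 0) = f x) (hUg : ∀ x, derivWithin (fun s => U (x, s)) (Ici 0) 0 = g x)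
    (x : EuclideanSpace ℝ (Fin n)) (w : EuclideanSpace ℝ (Fin n) × ℝ) :
    stDeriv U w (x, 0) = fderiv ℝ f x w.1 + w.2 * g x := by
  have h1 : w = (w.1, 0) + w.2 • ((0, 1) : EuclideanSpace ℝ (Fin n) × ℝ) := by
    ext <;> simp
  have h2 : stDeriv U w (x, 0) = stDeriv U (w.1, 0) (x, 0) + w.2 * stDeriv U (0, 1) (x, 0) := by
    conv_lhs => rw [h1]
    simp only [stDeriv, map_add, map_smul, smul_eq_mul]
  rw [h2, stDeriv_space_zero hU, stDeriv_time_zero hU, hUg]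
  simp only [hUf]

theorem exists_radius_of_hasCompactSupport {f : EuclideanSpace ℝ (Fin n) → ℝ}
    (hfc : HasCompactSupport f) : ∃ R : ℝ, ∀ x, R < ‖x‖ → f x = 0 ∧ fderiv ℝ f x = 0 := by
  obtain ⟨R, hR⟩ := hfc.isCompact.isBounded.exists_norm_le
  refine ⟨R, fun x hx => ?_⟩
  have hx' : x ∉ tsupport f := fun h => hx.not_ge (hR x h)
  exact ⟨image_eq_zero_of_notMem_tsupport hx',
    image_eq_zero_of_notMem_tsupport fun h => hx' (tsupport_fderiv_subset ℝ h)⟩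

theorem integral_translate_centroid {h : EuclideanSpace ℝ (Fin n) → ℝ} (hc : Continuous h)
    (hs : HasCompactSupport h) (hM : ∫ x, h x ≠ 0) :
    ∫ x, h (x + centroid h) • x = 0 := by
  have h1 : Integrable fun x => h x • x :=
    (hc.smul continuous_id).integrable_of_hasCompactSupport hs.smul_right
  have h2 : Integrable fun x => h x • centroid h :=
    (hc.integrable_of_hasCompactSupport hs).smul_const _
  calc ∫ x, h (x + centroid h) • x
      = ∫ x, (fun y => h y • (y - centroid h)) (x + centroid h) := by simp
    _ = ∫ y, h y • (y - centroid h) :=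
      integral_add_right_eq_self (fun y => h y • (y - centroid h)) _
    _ = (∫ y, h y • y) - (∫ y, h y) • centroid h := by
      simp only [smul_sub]
      rw [integral_sub h1 h2, integral_smul_const]
    _ = 0 := by rw [centroid, smul_inv_smul₀ hM, sub_self]

end CauchyProblem

/-- Theorem `movement` (2). There are `C > 0` and `T > 0` such that for
all `t ≥ T` and every time-delayed hot spot `x ∈ ℋ(t)`, `|x − m_h| ≤ C/t`,
where `h = f + g`; i.e. `sup{|x − m_h| : x ∈ ℋ(t)} = O(1/t)` as `t → ∞`. -/
theorem hot_spots_converge_to_centroid (n : ℕ) (hn : 1 ≤ n)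
    (f g : EuclideanSpace ℝ (Fin n) → ℝ)
    (hf : ContDiff ℝ (⊤ : ℕ∞) f) (hg : ContDiff ℝ (⊤ : ℕ∞) g)
    (hfc : HasCompactSupport f) (hgc : HasCompactSupport g)
    (hne : f + g ≠ 0) (hpos : ∀ x, 0 ≤ f x + g x)
    (u : EuclideanSpace ℝ (Fin n) → ℝ → ℝ)
    (hreg : ContDiffOn ℝ 2 (fun p : EuclideanSpace ℝ (Fin n) × ℝ => u p.1 p.2) (univ ×ˢ Ici 0))
    (hpde : ∀ x, ∀ t > (0 : ℝ),
      deriv (deriv (fun s => u x s)) t - lap (fun z => u z t) x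
        + deriv (fun s => u x s) t = 0)
    (hu0 : ∀ x, u x 0 = f x)
    (hu1 : ∀ x, derivWithin (fun s => u x s) (Ici 0) 0 = g x) :
    ∃ C > (0 : ℝ), ∃ T > (0 : ℝ), ∀ t ≥ T,
      ∀ x : EuclideanSpace ℝ (Fin n), (∀ ξ, u ξ t ≤ u x t) →
        ‖x - centroid (f + g)‖ ≤ C / t := by
  set m := centroid (f + g) with hm
  have hc : Continuous (f + g) := hf.continuous.add hg.continuous
  have hs : HasCompactSupport (f + g) := hfc.add hgc
  have hM : 0 < ∫ x, (f + g) x := by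
    obtain ⟨x, hx⟩ := Function.ne_iff.1 hne
    exact hc.integral_pos_of_hasCompactSupport_nonneg_nonzero hs hpos hx
  have hτ : ∀ {v : EuclideanSpace ℝ (Fin n) → ℝ}, HasCompactSupport v →
      HasCompactSupport fun x => v (x + m) := fun hv => hv.comp_homeomorph (Homeomorph.addRight m)
  have hU : ContDiffOn ℝ 2 (fun p : EuclideanSpace ℝ (Fin n) × ℝ => u (p.1 + m) p.2)
      (univ ×ˢ Ici 0) :=
    hreg.comp (f := fun p : EuclideanSpace ℝ (Fin n) × ℝ => (p.1 + m, p.2))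
      (by fun_prop) fun p hp => ⟨mem_univ _, hp.2⟩
  have hwave := isDampedWave_of_pde hU fun x t ht => by
    have h := hpde (x + m) t ht
    simp only [lap] at h ⊢
    simpa only [add_right_comm] using h
  have hfm : ContDiff ℝ (⊤ : ℕ∞) fun x => f (x + m) := hf.comp (contDiff_id.add contDiff_const)
  have hgm : ContDiff ℝ (⊤ : ℕ∞) fun x => g (x + m) := hg.comp (contDiff_id.add contDiff_const)
  obtain ⟨R₁, hR₁⟩ := exists_radius_of_hasCompactSupport (hτ hfc)
  obtain ⟨R₂, hR₂⟩ := exists_radius_of_hasCompactSupport (hτ hgc)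
  have hst := stDeriv_zero_eq hU (f := fun x => f (x + m)) (g := fun x => g (x + m))
    (fun x => hu0 (x + m)) fun x => hu1 (x + m)
  obtain ⟨C, hC, T, hT, h⟩ := norm_le_div_of_isMaxOn_wave (R := max R₁ R₂) hwave
    (fun x hx => (hu0 (x + m)).trans (hR₁ x ((le_max_left _ _).trans_lt hx)).1)
    (fun x hx w => by
      rw [hst, (hR₁ x ((le_max_left _ _).trans_lt hx)).2,
        (hR₂ x ((le_max_right _ _).trans_lt hx)).1]
      simp)
    hfm (hτ hfc) hgm (hτ hgc) (fun x => hu0 (x + m)) (fun x => by rw [hst]; simp)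
    (fun x => hpos (x + m)) (by rwa [← integral_add_right_eq_self _ m] at hM)
    (integral_translate_centroid hc hs hM.ne')
  exact ⟨C, hC, T, hT, fun t ht x hx => h t ht (x - m) fun ξ => by simpa using hx (ξ + m)⟩
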